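/- arXiv:2402.13285 — 6 statements merged into one kernel-verified Lean document; each statement's English description precedes it below -/
import Mathlib

section
/- General disintegrated PAC-Bayes bound (Rivasplata et al.): For any probability measure D on Z, any measurable function φ : H × Z^m → ℝ, any prior density P on H, any posterior Markov kernel S ↦ Q_S, and any δ ∈ (0,1], with probability at least 1−δ over S ∼ D^m and h ∼ Q_S one has φ(h,S) ≤ ln(Q_S(h)/P(h)) + ln[(1/δ) · E_{V∼D^m} E_{g∼P} e^{φ(g,V)}]. -/
open MeasureTheory ProbabilityTheory

/-- **General disintegrated PAC-Bayes bound (Rivasplata et al.).**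
For any probability measure `D` on `Z`, any measurable `φ : H × Z^m → ℝ`, any
strictly positive prior density `P` on `H`, any posterior Markov kernel
`S ↦ Q_S` (with strictly positive densities `Q S` w.r.t. the reference measure
`lam`), and any `δ ∈ (0,1]`, with probability at least `1 − δ` over
`S ∼ D^m` and `h ∼ Q_S` one has
`φ(h,S) ≤ ln(Q_S(h)/P(h)) + ln[(1/δ) · E_{V∼D^m} E_{g∼P} e^{φ(g,V)}]`
(the inequality being stated in `EReal` so that it is trivially true when the
double expectation is infinite). -/
theorem rivasplata_general_disintegrated_bound
    {Z H : Type*} [MeasurableSpace Z] [MeasurableSpace H]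
    (m : ℕ) (hm : 0 < m)
    (D : Measure Z) [IsProbabilityMeasure D]
    (lam : Measure H) [SigmaFinite lam]
    (P : H → ℝ) (hPpos : ∀ h, 0 < P h) (hPmeas : Measurable P)
    (Pm : Measure H) [IsProbabilityMeasure Pm]
    (hPm : Pm = lam.withDensity fun h => ENNReal.ofReal (P h))
    (Q : (Fin m → Z) → H → ℝ) (hQpos : ∀ S h, 0 < Q S h)
    (κ : Kernel (Fin m → Z) H) [IsMarkovKernel κ]
    (hκ : ∀ S, κ S = lam.withDensity fun h => ENNReal.ofReal (Q S h))
    (φ : H → (Fin m → Z) → ℝ) (hφ : Measurable (Function.uncurry φ))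
    (δ : ℝ) (hδ : δ ∈ Set.Ioc (0:ℝ) 1) :
    1 - ENNReal.ofReal δ ≤
      (Measure.pi (fun _ : Fin m => D) ⊗ₘ κ)
        {p : (Fin m → Z) × H |
          (φ p.2 p.1 : EReal) ≤ (Real.log (Q p.1 p.2 / P p.2) : EReal)
            + ENNReal.log (ENNReal.ofReal (1/δ) *
                ∫⁻ V, ∫⁻ g, ENNReal.ofReal (Real.exp (φ g V)) ∂Pm
                  ∂(Measure.pi (fun _ : Fin m => D))) } := by
  obtain ⟨hδ0, hδ1⟩ := hδ
  set E := ∫⁻ V, ∫⁻ g, ENNReal.ofReal (Real.exp (φ g V)) ∂Pm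
                  ∂(Measure.pi (fun _ : Fin m => D)) with hE
  set μ := Measure.pi (fun _ : Fin m => D) ⊗ₘ κ with hμ
  set G := {p : (Fin m → Z) × H |
          (φ p.2 p.1 : EReal) ≤ (Real.log (Q p.1 p.2 / P p.2) : EReal)
            + ENNReal.log (ENNReal.ofReal (1/δ) * E) } with hG
  have hδinv : ENNReal.ofReal (1/δ) ≠ 0 := by
    simpa using hδ0
  by_cases hEtop : E = ⊤
  · have : G = Set.univ := by
      ext p
      simp only [hG, hEtop, ENNReal.mul_top hδinv, ENNReal.log_top, Set.mem_ofPred_eq,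
        Set.mem_univ, iff_true, EReal.coe_add_top, le_top]
    rw [this, measure_univ]
    exact tsub_le_self
  have hmeas : Measurable (fun p : (Fin m → Z) × H => ENNReal.ofReal (Real.exp (φ p.2 p.1))) := by
    have : Measurable (fun p : (Fin m → Z) × H => φ p.2 p.1) := hφ.comp measurable_swap
    fun_prop
  have hmeasS : ∀ S, Measurable (fun h => ENNReal.ofReal (Real.exp (φ h S))) :=
    fun S => hmeas.comp measurable_prodMk_left
  have hE0 : E ≠ 0 := by
    intro h0
    rw [hE, lintegral_eq_zero_iff hmeas.lintegral_prod_right'] at h0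
    obtain ⟨V, hV⟩ := h0.exists
    simp only [Pi.zero_apply] at hV
    rw [lintegral_eq_zero_iff (hmeasS _)] at hV
    obtain ⟨g, hg⟩ := hV.exists
    simp only [Function.comp, Pi.zero_apply, ENNReal.ofReal_eq_zero] at hg
    exact absurd (Real.exp_pos _) (not_lt.2 hg)
  set t := 1/δ * E.toReal with ht
  have htE : ENNReal.ofReal (1/δ) * E = ENNReal.ofReal t := by
    rw [ht, ENNReal.ofReal_mul (by positivity), ENNReal.ofReal_toReal hEtop]
  have htpos : 0 < t := mul_pos (by positivity) (ENNReal.toReal_pos hE0 hEtop)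
  have key : ∀ S h, (S, h) ∉ G → Q S h * t ≤ P h * Real.exp (φ h S) := by
    intro S h hn
    have hr : 0 < Q S h / P h := div_pos (hQpos S h) (hPpos h)
    simp only [hG, Set.mem_ofPred_eq, htE] at hn
    rw [ENNReal.log_ofReal_of_pos htpos, ← EReal.coe_add, EReal.coe_le_coe_iff, not_le,
      ← Real.log_mul hr.ne' htpos.ne', Real.log_lt_iff_lt_exp (by positivity)] at hn
    rw [div_mul_eq_mul_div, div_lt_iff₀ (hPpos h)] at hn
    linarith
  set B := (toMeasurable μ G)ᶜ with hB
  have hBm : MeasurableSet B := (measurableSet_toMeasurable μ G).compl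
  have hBG : ∀ p ∈ B, p ∉ G := fun p hp hg => hp (subset_toMeasurable μ G hg)
  have h1 : ENNReal.ofReal t * μ B ≤ E := by
    rw [hμ, Measure.compProd_apply hBm, ← lintegral_const_mul' _ _ ENNReal.ofReal_ne_top]
    refine lintegral_mono fun S => ?_
    have hBS : MeasurableSet (Prod.mk S ⁻¹' B) := measurable_prodMk_left hBm
    dsimp only
    rw [hκ, withDensity_apply _ hBS, ← lintegral_const_mul' _ _ ENNReal.ofReal_ne_top, hPm,
      lintegral_withDensity_eq_lintegral_mul _ hPmeas.ennreal_ofReal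
        (hmeasS _)]
    refine le_trans (setLIntegral_mono' hBS fun h hh => ?_) (setLIntegral_le_lintegral _ _)
    simp only [Pi.mul_apply, Function.comp]
    rw [← ENNReal.ofReal_mul htpos.le, ← ENNReal.ofReal_mul (hPpos h).le]
    apply ENNReal.ofReal_le_ofReal
    rw [mul_comm]
    exact key S h (hBG _ hh)
  have h2 : μ B ≤ ENNReal.ofReal δ := by
    have hfin : μ B ≠ ⊤ := measure_ne_top _ _
    rw [← ENNReal.ofReal_toReal hfin] at h1 ⊢
    rw [← ENNReal.ofReal_mul htpos.le, ← ENNReal.ofReal_toReal hEtop,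
      ENNReal.ofReal_le_ofReal_iff ENNReal.toReal_nonneg] at h1
    apply ENNReal.ofReal_le_ofReal
    have hEp := ENNReal.toReal_pos hE0 hEtop
    rw [ht, one_div, mul_assoc, inv_mul_le_iff₀ hδ0, mul_comm] at h1
    exact le_of_mul_le_mul_right h1 hEp
  have h3 : μ G + μ B = 1 := by
    rw [← measure_toMeasurable (μ := μ) G, hB,
      measure_add_measure_compl (measurableSet_toMeasurable μ G), measure_univ]
  rw [tsub_le_iff_right, ← h3]
  gcongr
end

section
/- Main theorem (generalization bound with an arbitrary complexity measure): Let ℓ : H × Z → ℝ be a measurable loss and φ : ℝ² → ℝ a measurable generalization-gap function. For any probability measure D on Z, any prior density P on H, any measurable parametric function μ : H × Z^m → ℝ with finite positive Gibbs normalizer, and any δ ∈ (0,1], with probability at least 1−δ over h′ ∼ P, S ∼ D^m, and h ∼ Q_S (i.e. under the product of P with the measure D^m ⊗ Q, where Q_S is the Gibbs posterior for μ), one has φ(R_D^ℓ(h), R_S^ℓ(h)) ≤ μ(h′,S) − μ(h,S) + ln(P(h′)/P(h)) + ln[(4/δ²) · E_{V∼D^m} E_{g∼P} e^{φ(R_D^ℓ(g),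 R_V^ℓ(g))}]. -/
open MeasureTheory ProbabilityTheory

/-- The true risk `R_D^ℓ(h) = E_{z∼D} ℓ(h,z)`. -/
noncomputable def trueRisk {H Z : Type*} [MeasurableSpace Z]
    (D : Measure Z) (ℓ : H → Z → ℝ) (h : H) : ℝ :=
  ∫ z, ℓ h z ∂D

/-- The empirical risk `R_S^ℓ(h) = (1/m) Σ_{i=1}^m ℓ(h,z_i)`. -/
noncomputable def empRisk {H Z : Type*} {m : ℕ}
    (ℓ : H → Z → ℝ) (h : H) (S : Fin m → Z) : ℝ :=
  (∑ i, ℓ h (S i)) / m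

/-- **Main theorem: generalization bound with an arbitrary complexity measure.**
With probability at least `1−δ` over `h′ ∼ P`, `S ∼ D^m` and `h ∼ Q_S`
(where `Q_S` is the Gibbs posterior with density `exp(−μ(h,S))/Z_S`),
`φ(R_D^ℓ(h), R_S^ℓ(h)) ≤ μ(h′,S) − μ(h,S) + ln(P(h′)/P(h))
  + ln[(4/δ²) · E_{V∼D^m} E_{g∼P} e^{φ(R_D^ℓ(g), R_V^ℓ(g))}]`. -/
theorem gibbs_complexity_generalization_bound
    {Z H : Type*} [MeasurableSpace Z] [MeasurableSpace H]
    (m : ℕ) (hm : 0 < m)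
    (D : Measure Z) [IsProbabilityMeasure D]
    (lam : Measure H) [SigmaFinite lam]
    (ℓ : H → Z → ℝ) (hℓ : Measurable (Function.uncurry ℓ))
    (φ : ℝ → ℝ → ℝ) (hφ : Measurable (Function.uncurry φ))
    -- prior: strictly positive density `P` w.r.t. `lam`
    (P : H → ℝ) (hPpos : ∀ h, 0 < P h) (hPmeas : Measurable P)
    (Pm : Measure H) [IsProbabilityMeasure Pm]
    (hPm : Pm = lam.withDensity fun h => ENNReal.ofReal (P h))
    -- parametric function with finite positive Gibbs normalizer
    (μ : H → (Fin m → Z) → ℝ) (hμ : Measurable (Function.uncurry μ))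
    (hμint : ∀ S, Integrable (fun g => Real.exp (-(μ g S))) lam)
    (hZpos : ∀ S : Fin m → Z, 0 < ∫ g, Real.exp (-(μ g S)) ∂lam)
    -- the Gibbs posterior kernel
    (κ : Kernel (Fin m → Z) H) [IsMarkovKernel κ]
    (hκ : ∀ S, κ S = lam.withDensity fun h =>
      ENNReal.ofReal (Real.exp (-(μ h S)) / ∫ g, Real.exp (-(μ g S)) ∂lam))
    (δ : ℝ) (hδ : δ ∈ Set.Ioc (0:ℝ) 1) :
    1 - ENNReal.ofReal δ ≤
      (Pm.prod (Measure.pi (fun _ : Fin m => D) ⊗ₘ κ))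
        {p : H × ((Fin m → Z) × H) |
          (φ (trueRisk D ℓ p.2.2) (empRisk ℓ p.2.2 p.2.1) : EReal) ≤
            ((μ p.1 p.2.1 - μ p.2.2 p.2.1
                + Real.log (P p.1 / P p.2.2) : ℝ) : EReal)
            + ENNReal.log (ENNReal.ofReal (4/δ^2) *
                ∫⁻ V, ∫⁻ g, ENNReal.ofReal
                    (Real.exp (φ (trueRisk D ℓ g) (empRisk ℓ g V))) ∂Pm
                  ∂(Measure.pi (fun _ : Fin m => D))) } := by
  obtain ⟨hδ0, hδ1⟩ := hδ
  set ν : Measure (Fin m → Z) := Measure.pi (fun _ : Fin m => D) with hν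
  set Zf : (Fin m → Z) → ℝ := fun S => ∫ g, Real.exp (-(μ g S)) ∂lam with hZf
  have hZf' : ∀ S, 0 < Zf S := hZpos
  have hZmeas : Measurable Zf := by
    have h1 : Measurable (fun p : (Fin m → Z) × H => Real.exp (-(μ p.2 p.1))) :=
      Real.measurable_exp.comp (hμ.comp measurable_swap).neg
    exact h1.stronglyMeasurable.integral_prod_right'.measurable
  have hTmeas : Measurable (fun h => trueRisk D ℓ h) :=
    hℓ.stronglyMeasurable.integral_prod_right'.measurable
  have hEmeas : Measurable (fun p : (Fin m → Z) × H => empRisk ℓ p.2 p.1) := by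
    unfold empRisk
    refine Measurable.div_const (Finset.measurable_sum _ fun i _ => ?_) _
    exact hℓ.comp (measurable_snd.prodMk ((measurable_pi_apply i).comp measurable_fst))
  set F : (Fin m → Z) × H → ℝ :=
    fun p => Real.exp (φ (trueRisk D ℓ p.2) (empRisk ℓ p.2 p.1)) with hF
  have hFmeas : Measurable F :=
    Real.measurable_exp.comp (hφ.comp ((hTmeas.comp measurable_snd).prodMk hEmeas))
  have hFpos : ∀ p, 0 < F p := fun p => Real.exp_pos _
  set q : (Fin m → Z) × H → ℝ := fun p => Real.exp (-(μ p.2 p.1)) / Zf p.1 with hq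
  have hqmeas : Measurable q :=
    (Real.measurable_exp.comp (hμ.comp measurable_swap).neg).div (hZmeas.comp measurable_fst)
  have hqpos : ∀ p, 0 < q p := fun p => div_pos (Real.exp_pos _) (hZf' _)
  set M : ENNReal := ∫⁻ V, ∫⁻ g, ENNReal.ofReal
                    (Real.exp (φ (trueRisk D ℓ g) (empRisk ℓ g V))) ∂Pm ∂ν with hM
  have hc : ENNReal.ofReal (4/δ^2) ≠ 0 := by
    rw [Ne, ENNReal.ofReal_eq_zero, not_le]; positivity
  by_cases hMtop : M = ⊤
  · have : ENNReal.log (ENNReal.ofReal (4/δ^2) * M) = ⊤ := by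
      rw [hMtop, ENNReal.mul_top hc, ENNReal.log_top]
    rw [this]
    simp only [EReal.coe_add_top, le_top, Set.ofPred_true, measure_univ]
    exact tsub_le_self
  have hM0 : M ≠ 0 := by
    intro h0
    have h1 : Measurable (fun V => ∫⁻ g, ENNReal.ofReal (F (V, g)) ∂Pm) :=
      hFmeas.ennreal_ofReal.lintegral_prod_right'
    have h2 := (lintegral_eq_zero_iff h1).1 h0
    obtain ⟨V, hV⟩ := h2.exists
    have h3 := (lintegral_eq_zero_iff
      (hFmeas.ennreal_ofReal.comp (measurable_prodMk_left (x := V)))).1 hV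
    obtain ⟨g, hg⟩ := h3.exists
    have := hFpos (V, g)
    simp only [Function.comp, Pi.zero_apply, ENNReal.ofReal_eq_zero] at hg
    linarith
  set A : (Fin m → Z) × H → ENNReal := fun p => ENNReal.ofReal (F p * P p.2 / q p) with hA
  set B : (Fin m → Z) × H → ENNReal := fun p => ENNReal.ofReal (q p / P p.2) with hB
  have hAmeas : Measurable A :=
    ((hFmeas.mul (hPmeas.comp measurable_snd)).div hqmeas).ennreal_ofReal
  have hBmeas : Measurable B := (hqmeas.div (hPmeas.comp measurable_snd)).ennreal_ofReal
  have hAm' : Measurable (fun p : H × ((Fin m → Z) × H) => A p.2) := hAmeas.comp measurable_snd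
  have hBm' : Measurable (fun p : H × ((Fin m → Z) × H) => B (p.2.1, p.1)) :=
    hBmeas.comp ((measurable_fst.comp measurable_snd).prodMk measurable_fst)
  have hAint : ∫⁻ p, A p.2 ∂(Pm.prod (ν ⊗ₘ κ)) = M := by
    rw [lintegral_prod _ hAm'.aemeasurable]
    simp only [lintegral_const, measure_univ, mul_one]
    rw [Measure.lintegral_compProd hAmeas, hM]
    refine lintegral_congr fun S => ?_
    rw [hκ S, hPm]
    refine (lintegral_withDensity_eq_lintegral_mul _
        (hqmeas.comp (measurable_prodMk_left (x := S))).ennreal_ofReal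
        (hAmeas.comp (measurable_prodMk_left (x := S)))).trans (Eq.trans ?_
      (lintegral_withDensity_eq_lintegral_mul _ hPmeas.ennreal_ofReal
        (hFmeas.comp (measurable_prodMk_left (x := S))).ennreal_ofReal).symm)
    refine lintegral_congr fun g => ?_
    have h1 := hqpos (S, g)
    simp only [Pi.mul_apply, Function.comp, hA]
    rw [← ENNReal.ofReal_mul h1.le, ← ENNReal.ofReal_mul (hPpos g).le]
    congr 1
    field_simp
  have hBint : ∫⁻ p, B (p.2.1, p.1) ∂(Pm.prod (ν ⊗ₘ κ)) = 1 := by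
    rw [lintegral_prod_symm _ hBm'.aemeasurable]
    have : ∀ y : (Fin m → Z) × H, ∫⁻ x, B (y.1, x) ∂Pm = 1 := by
      intro y
      rw [hPm]
      refine (lintegral_withDensity_eq_lintegral_mul _ hPmeas.ennreal_ofReal
        (hBmeas.comp (measurable_prodMk_left (x := y.1)))).trans ?_
      have h2 : (κ y.1) Set.univ = 1 := measure_univ
      rw [hκ, withDensity_apply _ MeasurableSet.univ, Measure.restrict_univ] at h2
      rw [← h2]
      refine lintegral_congr fun g => ?_
      have h1 := hPpos g
      simp only [Pi.mul_apply, Function.comp, hB]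
      rw [← ENNReal.ofReal_mul h1.le]
      congr 1
      have h3 : P g * (q (y.1, g) / P g) = q (y.1, g) := by rw [mul_comm, div_mul_cancel₀ _ h1.ne']
      exact h3
    simp only [this, lintegral_const, measure_univ, mul_one]
  set G := Pm.prod (ν ⊗ₘ κ) with hG
  set c : ENNReal := ENNReal.ofReal (2/δ) with hcdef
  have hc0 : c ≠ 0 := by
    rw [hcdef, Ne, ENNReal.ofReal_eq_zero, not_le]; positivity
  have hct : c ≠ ⊤ := ENNReal.ofReal_ne_top
  have hcinv : c⁻¹ + c⁻¹ = ENNReal.ofReal δ := by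
    rw [hcdef, ← ENNReal.ofReal_inv_of_pos (by positivity),
      ← ENNReal.ofReal_add (by positivity) (by positivity)]
    congr 1
    field_simp
    ring
  have hbadA : G {p | c * M ≤ A p.2} ≤ c⁻¹ := by
    have := meas_ge_le_lintegral_div (μ := G) hAm'.aemeasurable
      (mul_ne_zero hc0 hM0) (ENNReal.mul_ne_top hct hMtop)
    rw [hAint] at this
    refine this.trans (le_of_eq ?_)
    rw [ENNReal.div_eq_inv_mul, ENNReal.mul_inv (Or.inl hc0) (Or.inl hct), mul_assoc,
      ENNReal.inv_mul_cancel hM0 hMtop, mul_one]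
  have hbadB : G {p | c ≤ B (p.2.1, p.1)} ≤ c⁻¹ := by
    have := meas_ge_le_lintegral_div (μ := G) hBm'.aemeasurable hc0 hct
    rwa [hBint, one_div] at this
  set bad : Set (H × ((Fin m → Z) × H)) :=
    {p | c * M ≤ A p.2} ∪ {p | c ≤ B (p.2.1, p.1)} with hbad
  have hbadm : MeasurableSet bad :=
    (measurableSet_le measurable_const hAm').union (measurableSet_le measurable_const hBm')
  have hbadle : G bad ≤ ENNReal.ofReal δ :=
    (measure_union_le _ _).trans ((add_le_add hbadA hbadB).trans hcinv.le)
  have hcompl : G badᶜ = 1 - G bad := prob_compl_eq_one_sub hbadm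
  refine (tsub_le_tsub_left hbadle 1).trans (hcompl.symm.le.trans (measure_mono ?_))
  rintro ⟨h', S, h⟩ hp
  simp only [hbad, Set.mem_compl_iff, Set.mem_union, Set.mem_ofPred_eq, not_or, not_le] at hp
  obtain ⟨h1, h2⟩ := hp
  simp only [Set.mem_ofPred_eq]
  have hMr : M = ENNReal.ofReal M.toReal := (ENNReal.ofReal_toReal hMtop).symm
  have hMpos : 0 < M.toReal := ENNReal.toReal_pos hM0 hMtop
  rw [hMr] at h1 ⊢
  set r := M.toReal
  rw [hcdef, ← ENNReal.ofReal_mul (by positivity), ENNReal.ofReal_lt_ofReal_iff (by positivity)] at h1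
  rw [ENNReal.ofReal_lt_ofReal_iff (by positivity)] at h2
  rw [← ENNReal.ofReal_mul (by positivity), ENNReal.log_ofReal_of_pos (by positivity),
    ← EReal.coe_add, EReal.coe_le_coe_iff]
  have hP1 := hPpos h
  have hP2 := hPpos h'
  have hq1 := hqpos (S, h)
  have hq2 := hqpos (S, h')
  have hF1 := hFpos (S, h)
  have key : (F (S, h) * P h / q (S, h)) * (q (S, h') / P h') ≤ 4 / δ^2 * r := by
    calc _ ≤ (2 / δ * r) * (2 / δ) := by
          exact mul_le_mul h1.le h2.le (by positivity) (by positivity)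
      _ = _ := by field_simp; ring
  have hl := Real.log_le_log (by positivity) key
  have hZS := hZf' S
  rw [Real.log_mul (by positivity) (by positivity),
    Real.log_div (x := F (S, h) * P h) (y := q (S, h)) (by positivity) (by positivity),
    Real.log_mul (x := F (S, h)) (y := P h) (by positivity) (by positivity),
    Real.log_div (x := q (S, h')) (y := P h') (by positivity) (by positivity)] at hl
  have e1 : ∀ g, Real.log (q (S, g)) = - μ g S - Real.log (Zf S) := by
    intro g
    simp only [hq]
    rw [Real.log_div (Real.exp_pos _).ne' hZS.ne', Real.log_exp]
  rw [e1, e1] at hl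
  have e2 : Real.log (F (S, h)) = φ (trueRisk D ℓ h) (empRisk ℓ h S) := Real.log_exp _
  rw [e2] at hl
  rw [Real.log_div (by positivity) (by positivity)]
  linarith
end

section
/- For any probability measure D on Z, any loss ℓ : H × Z → [0,1], any prior density P on H, any measurable parametric function μ : H × Z^m → ℝ with finite positive Gibbs normalizer, and any δ ∈ (0,1], with probability at least 1−δ over S ∼ D^m, h′ ∼ P, and h ∼ Q_S (Gibbs posterior for μ), one has kl(R_S^ℓ(h) ‖ R_D^ℓ(h)) ≤ (1/m)·[ μ(h′,S) − μ(h,S) + ln(P(h′)/P(h)) + ln(8√m/δ²) ]. -/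
open MeasureTheory ProbabilityTheory

/-- The binary KL divergence `kl(q‖p) = q ln(q/p) + (1−q) ln((1−q)/(1−p))`. -/
noncomputable def binKL (q p : ℝ) : ℝ :=
  q * Real.log (q / p) + (1 - q) * Real.log ((1 - q) / (1 - p))

lemma qlog (q p : ℝ) (hp : p ≠ 0) : q * Real.log (q / p) = q * Real.log q - q * Real.log p := by
  by_cases hq : q = 0
  · simp [hq]
  · rw [Real.log_div hq hp]; ring

lemma binKL_eq (q p : ℝ) (hp : 0 < p) (hp1 : p < 1) :
    binKL q p = q * Real.log q - q * Real.log p + ((1-q) * Real.log (1-q) - (1-q) * Real.log (1-p)) := by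
  unfold binKL
  rw [qlog _ _ hp.ne', qlog _ _ (by linarith)]

lemma exp_binKL_le (q p : ℝ) (hq : 0 ≤ q) (hq1 : q ≤ 1) (hp : 0 < p) (hp1 : p < 1) :
    Real.exp (binKL q p) ≤ q^2/p + (1-q)^2/(1-p) := by
  have h1p : 0 < 1 - p := by linarith
  have key : ∀ a b : ℝ, 0 ≤ a → 0 < b → Real.exp (a * Real.log (a/b)) = (a/b)^a := by
    intro a b ha hb
    rcases ha.eq_or_lt with rfl | ha
    · simp
    · rw [Real.rpow_def_of_pos (by positivity), mul_comm]
  unfold binKL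
  rw [Real.exp_add, key _ _ hq hp, key _ _ (by linarith) h1p]
  have := Real.geom_mean_le_arith_mean2_weighted hq (show 0 ≤ 1 - q by linarith)
    (div_nonneg hq hp.le) (div_nonneg (show 0 ≤ 1 - q by linarith) h1p.le) (by ring)
  refine this.trans (le_of_eq ?_)
  ring

lemma binKL_cos_aux (m : ℕ) (hm : 0 < m) (α s : ℝ) (hα : 0 ≤ α) (hα2 : α ≤ Real.pi/2)
    (hs : 0 < s) (hs1 : s ≤ 3/5 / Real.sqrt m) :
    0.6724 ≤ Real.exp (-(m * binKL ((1 - Real.cos α)/2) ((1 - Real.cos (α+s))/2))) := by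
  have hm1 : (1:ℝ) ≤ m := by exact_mod_cast hm
  have hsq1 : 1 ≤ Real.sqrt m := by rw [Real.one_le_sqrt]; exact hm1
  have hs35 : s ≤ 3/5 := hs1.trans (div_le_self (by norm_num) hsq1)
  have hpi := Real.pi_gt_three
  have hss : s^2 ≤ 0.36 / m := by
    calc s^2 ≤ (3/5 / Real.sqrt m)^2 := by gcongr
      _ = (0.36 / m : ℝ) := by rw [div_pow, Real.sq_sqrt (by positivity)]; norm_num
  have hc : 0 ≤ Real.cos α := Real.cos_nonneg_of_neg_pi_div_two_le_of_le (by linarith) hα2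
  have hsin : 0 < Real.sin (α+s) := Real.sin_pos_of_pos_of_lt_pi (by linarith) (by linarith)
  have hsins : 0 < Real.sin s := Real.sin_pos_of_pos_of_lt_pi (by linarith) (by linarith)
  have hcoss : 1 - s^2/2 ≤ Real.cos s := Real.one_sub_sq_div_two_le_cos
  have hcoss0 : 0 < Real.cos s := by nlinarith
  have hle : Real.cos (α+s) ≤ Real.cos α :=
    Real.cos_le_cos_of_nonneg_of_le_pi hα (by linarith) (by linarith)
  have hadd : Real.cos α = Real.cos (α+s) * Real.cos s + Real.sin (α+s) * Real.sin s := by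
    rw [← Real.cos_sub]; simp
  have hsc := Real.sin_sq_add_cos_sq (α+s)
  have hscs := Real.sin_sq_add_cos_sq s
  have hc1 := Real.cos_le_one s
  have hca1 := Real.cos_le_one α
  set c := Real.cos α
  set b := Real.cos (α+s)
  set sb := Real.sin (α+s)
  set cs := Real.cos s
  set ss := Real.sin s
  have hb1 : b < 1 := by nlinarith
  have hb2 : -1 < b := by nlinarith
  have hk : (c - b) * cs ≤ sb * ss := by nlinarith
  have h2 : ((c-b)*cs)^2 ≤ (sb*ss)^2 := pow_le_pow_left₀ (mul_nonneg (by linarith) hcoss0.le) hk 2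
  have h3 : Real.exp (binKL ((1 - c)/2) ((1 - b)/2)) ≤ 1 / cs^2 := by
    refine (exp_binKL_le _ _ (by linarith) (by linarith) (by linarith) (by linarith)).trans ?_
    have e : ((1 - c)/2)^2/((1 - b)/2) + (1-(1 - c)/2)^2/(1-(1 - b)/2) = 1 + (c-b)^2/sb^2 := by
      have : sb^2 = (1-b)*(1+b) := by linarith
      rw [this]
      have : 1 - b ≠ 0 := by linarith
      have : 1 + b ≠ 0 := by linarith
      have : 1 - (1-b)/2 = (1+b)/2 := by ring
      rw [this]
      field_simp
      ring
    rw [e]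
    have : 1 + (c-b)^2/sb^2 ≤ 1 + ss^2/cs^2 := by
      gcongr 1 + ?_
      rw [div_le_div_iff₀ (by positivity) (by positivity)]
      nlinarith
    refine this.trans (le_of_eq ?_)
    field_simp
    linarith
  have h4 : cs^2 ≤ Real.exp (-(binKL ((1 - c)/2) ((1 - b)/2))) := by
    rw [Real.exp_neg, le_inv_comm₀ (by positivity) (Real.exp_pos _), ← one_div]
    exact h3
  rw [← mul_neg, Real.exp_nat_mul]
  have h5 : 0.82 ≤ cs^m := by
    have hb := one_add_mul_le_pow (a := -(0.18/m : ℝ)) (by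
      have : 0.18/(m:ℝ) ≤ 0.18 := div_le_self (by norm_num) hm1
      linarith) m
    have : (m:ℝ) * -(0.18/m) = -0.18 := by field_simp
    rw [this] at hb
    have : 1 + -(0.18/m : ℝ) ≤ cs := by
      have : (0.36/m : ℝ) = 2 * (0.18/m) := by ring
      linarith
    have hn : 0 ≤ 1 + -(0.18/m : ℝ) := by
      have : 0.18/(m:ℝ) ≤ 0.18 := div_le_self (by norm_num) hm1
      linarith
    calc (0.82:ℝ) ≤ (1 + -(0.18/m : ℝ))^m := by linarith
      _ ≤ _ := by gcongr
  calc (0.6724:ℝ) ≤ (cs^m)^2 := by nlinarith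
    _ = (cs^2)^m := by ring
    _ ≤ _ := by gcongr

lemma binKL_symm (q p : ℝ) : binKL (1-q) (1-p) = binKL q p := by
  unfold binKL; simp; ring

lemma exists_interval (m : ℕ) (hm : 0 < m) (q : ℝ) (hq : 0 ≤ q) (hq1 : q ≤ 1) :
    ∃ a : ℝ, Set.Ioo a (a + 3/5 / Real.sqrt m) ⊆ Set.Ioo 0 Real.pi ∧
      ∀ β ∈ Set.Ioo a (a + 3/5 / Real.sqrt m),
        0.6724 ≤ Real.exp (-(m * binKL q ((1 - Real.cos β)/2))) := by
  have hm1 : (1:ℝ) ≤ m := by exact_mod_cast hm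
  have hsq1 : 1 ≤ Real.sqrt m := by rw [Real.one_le_sqrt]; exact hm1
  have hs35 : 3/5 / Real.sqrt m ≤ 3/5 := (div_le_self (by norm_num) hsq1)
  have hpi := Real.pi_gt_three
  have hq' : q = (1 - Real.cos (Real.arccos (1-2*q)))/2 := by
    rw [Real.cos_arccos (by linarith) (by linarith)]; ring
  set α := Real.arccos (1-2*q)
  have hα0 : 0 ≤ α := Real.arccos_nonneg _
  have hαp : α ≤ Real.pi := Real.arccos_le_pi _
  rcases le_total α (Real.pi/2) with h | h
  · refine ⟨α, fun x hx => ⟨by linarith [hx.1], by linarith [hx.2]⟩, fun β hβ => ?_⟩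
    have := binKL_cos_aux m hm α (β - α) hα0 h (by linarith [hβ.1]) (by linarith [hβ.2])
    rw [← hq'] at this
    simpa using this
  · refine ⟨α - 3/5 / Real.sqrt m, fun x hx => ⟨by linarith [hx.1], by linarith [hx.2]⟩, fun β hβ => ?_⟩
    have := binKL_cos_aux m hm (Real.pi - α) (α - β) (by linarith) (by linarith) (by linarith [hβ.2]) (by linarith [hβ.1])
    rw [show Real.pi - α + (α - β) = Real.pi - β by ring, Real.cos_pi_sub, Real.cos_pi_sub,
      show (1 - -Real.cos α)/2 = 1 - q by rw [hq']; ring,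
      show (1 - -Real.cos β)/2 = 1 - (1 - Real.cos β)/2 by ring, binKL_symm] at this
    exact this

lemma one_theta {Z : Type*} [MeasurableSpace Z] (D : Measure Z) [IsProbabilityMeasure D]
    (m : ℕ) (f : Z → ℝ) (hf : Measurable f) (hf01 : ∀ z, f z ∈ Set.Icc (0:ℝ) 1)
    (p θ : ℝ) (hpf : p = ∫ z, f z ∂D) (hp : 0 < p) (hp1 : p < 1) (ht : 0 < θ) (ht1 : θ < 1) :
    ∫⁻ S, ENNReal.ofReal (∏ i, Real.exp (f (S i) * Real.log (θ/p) +
      (1 - f (S i)) * Real.log ((1-θ)/(1-p)))) ∂(Measure.pi (fun _ : Fin m => D)) ≤ 1 := by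
  have h1p : 0 < 1 - p := by linarith
  have h1t : 0 < 1 - θ := by linarith
  set g : Z → ℝ := fun z => Real.exp (f z * Real.log (θ/p) + (1 - f z) * Real.log ((1-θ)/(1-p))) with hg
  have hgm : Measurable g := by fun_prop
  have hfint : Integrable f D := by
    refine Integrable.of_bound hf.aestronglyMeasurable 1 (Filter.Eventually.of_forall fun z => ?_)
    rw [Real.norm_eq_abs, abs_of_nonneg (hf01 z).1]; exact (hf01 z).2
  have hgle : ∀ z, g z ≤ f z * (θ/p) + (1 - f z) * ((1-θ)/(1-p)) := by
    intro z
    have := Real.geom_mean_le_arith_mean2_weighted (hf01 z).1 (show 0 ≤ 1 - f z by linarith [(hf01 z).2])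
      (div_nonneg ht.le hp.le) (div_nonneg h1t.le h1p.le) (by ring)
    rw [Real.rpow_def_of_pos (by positivity), Real.rpow_def_of_pos (by positivity), ← Real.exp_add] at this
    simp only [hg]
    convert this using 2
    ring
  have hrint : Integrable (fun z => f z * (θ/p) + (1 - f z) * ((1-θ)/(1-p))) D :=
    (hfint.mul_const _).add (((integrable_const 1).sub hfint).mul_const _)
  have hgint : Integrable g D := by
    refine hrint.mono' hgm.aestronglyMeasurable (Filter.Eventually.of_forall fun z => ?_)
    rw [Real.norm_eq_abs, abs_of_nonneg (Real.exp_pos _).le]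
    exact hgle z
  have hg1 : ∫ z, g z ∂D ≤ 1 := by
    refine (integral_mono hgint hrint hgle).trans (le_of_eq ?_)
    have hfi' : Integrable (fun z => (1 - f z) * ((1-θ)/(1-p))) D :=
      ((integrable_const 1).sub hfint).mul_const _
    rw [integral_add (hfint.mul_const _) hfi', integral_mul_const, integral_mul_const, integral_sub (integrable_const 1) hfint, ← hpf]
    simp
    field_simp
    ring
  have hprod : Integrable (fun S : Fin m → Z => ∏ i, g (S i)) (Measure.pi (fun _ : Fin m => D)) :=
    Integrable.fintype_prod (fun _ => hgint)
  rw [← ofReal_integral_eq_lintegral_ofReal hprod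
    (Filter.Eventually.of_forall fun S => Finset.prod_nonneg fun i _ => (Real.exp_pos _).le)]
  rw [integral_fintype_prod_eq_pow g]
  rw [ENNReal.ofReal_le_one]
  exact pow_le_one₀ (integral_nonneg fun z => (Real.exp_pos _).le) hg1

lemma measurable_binKL : Measurable (fun x : ℝ × ℝ => binKL x.1 x.2) := by
  unfold binKL
  fun_prop

lemma maurer_interior {Z : Type*} [MeasurableSpace Z] (D : Measure Z) [IsProbabilityMeasure D]
    (m : ℕ) (hm : 0 < m) (f : Z → ℝ) (hf : Measurable f) (hf01 : ∀ z, f z ∈ Set.Icc (0:ℝ) 1)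
    (p : ℝ) (hpf : p = ∫ z, f z ∂D) (hp : 0 < p) (hp1 : p < 1) :
    ∫⁻ S, ENNReal.ofReal (Real.exp (m * binKL ((∑ i, f (S i)) / m) p))
      ∂(Measure.pi (fun _ : Fin m => D)) ≤ ENNReal.ofReal (8 * Real.sqrt m) := by
  have hm0 : (0:ℝ) < m := by exact_mod_cast hm
  have hsq : 0 < Real.sqrt m := Real.sqrt_pos.2 hm0
  set θ : ℝ → ℝ := fun β => (1 - Real.cos β)/2 with hθ
  have hθ01 : ∀ β ∈ Set.Ioo 0 Real.pi, 0 < θ β ∧ θ β < 1 := by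
    intro β hβ
    have h1 := Real.sin_pos_of_pos_of_lt_pi hβ.1 hβ.2
    have h2 := Real.sin_sq_add_cos_sq β
    constructor <;> simp only [hθ] <;> nlinarith
  set G : (Fin m → Z) → ℝ → ENNReal := fun S β => ENNReal.ofReal
    (∏ i, Real.exp (f (S i) * Real.log (θ β/p) + (1 - f (S i)) * Real.log ((1-θ β)/(1-p)))) with hG
  have hGm : Measurable (Function.uncurry G) := by
    simp only [hG, hθ, Function.uncurry_def]
    fun_prop
  set c : ℝ := 3/5 / Real.sqrt m with hc
  have hcpos : 0 < c := by positivity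
  have hpt : ∀ S, ENNReal.ofReal (Real.exp (m * binKL ((∑ i, f (S i)) / m) p)) * ENNReal.ofReal (0.6724 * c)
      ≤ ∫⁻ β in Set.Ioo 0 Real.pi, G S β := by
    intro S
    set q := (∑ i, f (S i)) / m with hq
    have hsum : ∑ i, f (S i) = m * q := by rw [hq]; field_simp
    have hq0 : 0 ≤ q := div_nonneg (Finset.sum_nonneg fun i _ => (hf01 _).1) hm0.le
    have hq1 : q ≤ 1 := by
      rw [hq, div_le_one hm0]
      calc ∑ i, f (S i) ≤ ∑ i : Fin m, (1:ℝ) := Finset.sum_le_sum fun i _ => (hf01 _).2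
        _ = m := by simp
    obtain ⟨a, hsub, ha⟩ := exists_interval m hm q hq0 hq1
    calc _ = ∫⁻ β in Set.Ioo a (a + c), ENNReal.ofReal (Real.exp (m * binKL q p)) * ENNReal.ofReal 0.6724 := by
          rw [setLIntegral_const, Real.volume_Ioo, mul_assoc, ENNReal.ofReal_mul (p := 0.6724) (by norm_num),
            add_sub_cancel_left]
      _ ≤ ∫⁻ β in Set.Ioo a (a + c), G S β := by
          refine setLIntegral_mono' measurableSet_Ioo fun β hβ => ?_
          obtain ⟨t0, t1⟩ := hθ01 β (hsub hβ)
          rw [← ENNReal.ofReal_mul (Real.exp_pos _).le]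
          refine ENNReal.ofReal_le_ofReal ?_
          calc _ ≤ Real.exp (m * binKL q p) * Real.exp (-(m * binKL q (θ β))) := by
                gcongr; exact ha β hβ
            _ = _ := by
                rw [← Real.exp_add, ← Real.exp_sum, Finset.sum_add_distrib, ← Finset.sum_mul,
                  ← Finset.sum_mul, Finset.sum_sub_distrib, hsum, binKL_eq _ _ hp hp1,
                  binKL_eq _ _ t0 t1, Real.log_div t0.ne' hp.ne', Real.log_div (sub_pos.2 t1).ne' (sub_pos.2 hp1).ne']
                congr 1
                simp
                ring
      _ ≤ _ := lintegral_mono_set hsub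
  have hint : (∫⁻ S, ENNReal.ofReal (Real.exp (m * binKL ((∑ i, f (S i)) / m) p))
      ∂(Measure.pi (fun _ : Fin m => D))) * ENNReal.ofReal (0.6724 * c) ≤ ENNReal.ofReal Real.pi := by
    rw [← lintegral_mul_const' _ _ ENNReal.ofReal_ne_top]
    refine (lintegral_mono hpt).trans ?_
    rw [lintegral_lintegral_swap hGm.aemeasurable]
    calc _ ≤ ∫⁻ β in Set.Ioo 0 Real.pi, 1 := by
          refine setLIntegral_mono' measurableSet_Ioo fun β hβ => ?_
          obtain ⟨t0, t1⟩ := hθ01 β hβ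
          exact one_theta D m f hf hf01 p _ hpf hp hp1 t0 t1
      _ = _ := by simp
  have hk : 0 < 0.6724 * c := by positivity
  rw [← ENNReal.le_div_iff_mul_le (Or.inl (by simpa using hk)) (Or.inl ENNReal.ofReal_ne_top),
    ← ENNReal.ofReal_div_of_pos hk] at hint
  refine hint.trans (ENNReal.ofReal_le_ofReal ?_)
  rw [div_le_iff₀ hk, hc]
  have : 8 * Real.sqrt m * (0.6724 * (3/5 / Real.sqrt m)) = 8 * 0.6724 * (3/5) := by field_simp
  rw [this]
  linarith [Real.pi_lt_d2]

lemma maurer {Z : Type*} [MeasurableSpace Z] (D : Measure Z) [IsProbabilityMeasure D]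
    (m : ℕ) (hm : 0 < m) (f : Z → ℝ) (hf : Measurable f) (hf01 : ∀ z, f z ∈ Set.Icc (0:ℝ) 1) :
    ∫⁻ S, ENNReal.ofReal (Real.exp (m * binKL ((∑ i, f (S i)) / m) (∫ z, f z ∂D)))
      ∂(Measure.pi (fun _ : Fin m => D)) ≤ ENNReal.ofReal (8 * Real.sqrt m) := by
  have hm0 : (0:ℝ) < m := by exact_mod_cast hm
  have hm1 : (1:ℝ) ≤ m := by exact_mod_cast hm
  have hsq1 : 1 ≤ Real.sqrt m := by rw [Real.one_le_sqrt]; exact hm1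
  have hfint : Integrable f D := by
    refine Integrable.of_bound hf.aestronglyMeasurable 1 (Filter.Eventually.of_forall fun z => ?_)
    rw [Real.norm_eq_abs, abs_of_nonneg (hf01 z).1]; exact (hf01 z).2
  have h0 : 0 ≤ ∫ z, f z ∂D := integral_nonneg fun z => (hf01 z).1
  have h1 : ∫ z, f z ∂D ≤ 1 := by
    calc _ ≤ ∫ z, (1:ℝ) ∂D := integral_mono hfint (integrable_const 1) fun z => (hf01 z).2
      _ = 1 := by simp
  have deg : ∀ v : ℝ, (∀ᵐ z ∂D, f z = v) → binKL v (∫ z, f z ∂D) = 0 →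
      ∫⁻ S, ENNReal.ofReal (Real.exp (m * binKL ((∑ i, f (S i)) / m) (∫ z, f z ∂D)))
      ∂(Measure.pi (fun _ : Fin m => D)) ≤ ENNReal.ofReal (8 * Real.sqrt m) := by
    intro v hv hb
    have hS : ∀ᵐ S ∂(Measure.pi (fun _ : Fin m => D)), ∀ i, f (S i) = v :=
      Filter.eventually_all.2 fun i => (Measure.tendsto_eval_ae_ae (μ := fun _ : Fin m => D) (i := i)).eventually hv
    calc _ = ∫⁻ S, 1 ∂(Measure.pi (fun _ : Fin m => D)) := by
          refine lintegral_congr_ae ?_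
          filter_upwards [hS] with S hS
          have : (∑ i, f (S i)) / m = v := by simp [hS]; field_simp
          rw [this, hb]; simp
      _ = ENNReal.ofReal 1 := by simp
      _ ≤ _ := ENNReal.ofReal_le_ofReal (by linarith)
  rcases h0.eq_or_lt with h0 | h0
  · refine deg 0 ?_ (by rw [← h0]; simp [binKL])
    have := (integral_eq_zero_iff_of_nonneg (fun z => (hf01 z).1) hfint).1 h0.symm
    filter_upwards [this] with z hz using hz
  rcases h1.eq_or_lt with h1 | h1
  · refine deg 1 ?_ (by rw [h1]; simp [binKL])
    have hz : ∫ z, (1 - f z) ∂D = 0 := by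
      rw [integral_sub (integrable_const 1) hfint, h1]; simp
    have := (integral_eq_zero_iff_of_nonneg (fun z => sub_nonneg.2 (hf01 z).2)
      ((integrable_const 1).sub hfint)).1 hz
    filter_upwards [this] with z hz
    have : 1 - f z = 0 := hz
    linarith
  exact maurer_interior D m hm f hf hf01 _ rfl h0 h1

/-- **Disintegrated PAC-Bayes bound with complexity measure, kl form.**
With probability at least `1−δ` over `S ∼ D^m`, `h′ ∼ P` and `h ∼ Q_S`
(Gibbs posterior for `μ`),
`kl(R_S^ℓ(h) ‖ R_D^ℓ(h)) ≤ (1/m)·[μ(h′,S) − μ(h,S) + ln(P(h′)/P(h)) + ln(8√m/δ²)]`. -/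
theorem gibbs_complexity_kl_bound
    {Z H : Type*} [MeasurableSpace Z] [MeasurableSpace H]
    (m : ℕ) (hm : 0 < m)
    (D : Measure Z) [IsProbabilityMeasure D]
    (lam : Measure H) [SigmaFinite lam]
    (ℓ : H → Z → ℝ) (hℓ : Measurable (Function.uncurry ℓ))
    (hℓ01 : ∀ h z, ℓ h z ∈ Set.Icc (0:ℝ) 1)
    (P : H → ℝ) (hPpos : ∀ h, 0 < P h) (hPmeas : Measurable P)
    (Pm : Measure H) [IsProbabilityMeasure Pm]
    (hPm : Pm = lam.withDensity fun h => ENNReal.ofReal (P h))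
    (μ : H → (Fin m → Z) → ℝ) (hμ : Measurable (Function.uncurry μ))
    (hμint : ∀ S, Integrable (fun g => Real.exp (-(μ g S))) lam)
    (hZpos : ∀ S : Fin m → Z, 0 < ∫ g, Real.exp (-(μ g S)) ∂lam)
    (κ : Kernel (Fin m → Z) H) [IsMarkovKernel κ]
    (hκ : ∀ S, κ S = lam.withDensity fun h =>
      ENNReal.ofReal (Real.exp (-(μ h S)) / ∫ g, Real.exp (-(μ g S)) ∂lam))
    (δ : ℝ) (hδ : δ ∈ Set.Ioc (0:ℝ) 1) :
    1 - ENNReal.ofReal δ ≤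
      (Pm.prod (Measure.pi (fun _ : Fin m => D) ⊗ₘ κ))
        {p : H × ((Fin m → Z) × H) |
          binKL (empRisk ℓ p.2.2 p.2.1) (trueRisk D ℓ p.2.2) ≤
            (1 / m) * (μ p.1 p.2.1 - μ p.2.2 p.2.1
              + Real.log (P p.1 / P p.2.2)
              + Real.log (8 * Real.sqrt m / δ^2)) } := by
  classical
  obtain ⟨hδ0, hδ1⟩ := hδ
  have hm0 : (0:ℝ) < m := by exact_mod_cast hm
  have hsq : 0 < Real.sqrt m := Real.sqrt_pos.2 hm0
  have hrisk : Measurable (fun h => trueRisk D ℓ h) := by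
    unfold trueRisk
    exact (hℓ.stronglyMeasurable.integral_prod_right).measurable
  have hemp : Measurable (fun x : (Fin m → Z) × H => empRisk ℓ x.2 x.1) := by
    unfold empRisk
    refine Measurable.div_const (Finset.measurable_sum _ fun i _ => ?_) _
    exact hℓ.comp (measurable_snd.prodMk ((measurable_pi_apply i).comp measurable_fst))
  have hkl : Measurable (fun x : (Fin m → Z) × H =>
      binKL (empRisk ℓ x.2 x.1) (trueRisk D ℓ x.2)) :=
    measurable_binKL.comp (hemp.prodMk (hrisk.comp measurable_snd))
  set E : (Fin m → Z) → H → ENNReal := fun S h =>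
    ENNReal.ofReal (Real.exp (m * binKL (empRisk ℓ h S) (trueRisk D ℓ h))) with hE
  have hEm : Measurable (Function.uncurry E) := by
    simp only [hE, Function.uncurry_def]
    fun_prop
  set A : (Fin m → Z) → H → ENNReal := fun S h => ENNReal.ofReal (Real.exp (μ h S) * P h) with hA
  have hμ1 : Measurable (fun x : (Fin m → Z) × H => μ x.2 x.1) := hμ.comp measurable_swap
  have hAm : Measurable (Function.uncurry A) := by
    simp only [hA, Function.uncurry_def]
    fun_prop
  set B : (Fin m → Z) → H → ENNReal := fun S h => ENNReal.ofReal (Real.exp (-(μ h S)) / P h) with hB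
  have hBm : Measurable (Function.uncurry B) := by
    simp only [hB, Function.uncurry_def]
    fun_prop
  have hPof : Measurable (fun h => ENNReal.ofReal (P h)) := by fun_prop
  set ZS : (Fin m → Z) → ℝ := fun S => ∫ g, Real.exp (-(μ g S)) ∂lam with hZS
  have hBint : ∀ S, ∫⁻ h, B S h ∂Pm = ENNReal.ofReal (ZS S) := by
    intro S
    rw [hPm, lintegral_withDensity_eq_lintegral_mul _ hPof hBm.of_uncurry_left, hZS,
      ofReal_integral_eq_lintegral_ofReal (hμint S)
        (Filter.Eventually.of_forall fun _ => (Real.exp_pos _).le)]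
    refine lintegral_congr fun h => ?_
    simp only [hB, Pi.mul_apply]
    rw [← ENNReal.ofReal_mul (hPpos h).le]
    congr 1
    have := (hPpos h).ne'
    field_simp
  have hAint : ∀ S, ∫⁻ h, E S h * A S h * ENNReal.ofReal (ZS S) ∂(κ S) = ∫⁻ h, E S h ∂Pm := by
    intro S
    have hμS : Measurable (fun h => μ h S) := hμ.of_uncurry_right
    have hd : Measurable fun h => ENNReal.ofReal (Real.exp (-(μ h S)) / ZS S) := by fun_prop
    have hEA : Measurable fun h => E S h * A S h * ENNReal.ofReal (ZS S) :=
      (hEm.of_uncurry_left.mul hAm.of_uncurry_left).mul_const _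
    rw [hκ S, hPm, lintegral_withDensity_eq_lintegral_mul _ hd hEA,
      lintegral_withDensity_eq_lintegral_mul _ hPof hEm.of_uncurry_left]
    refine lintegral_congr fun h => ?_
    have hz : 0 < ZS S := hZpos S
    have hP := hPpos h
    simp only [hE, hA, Pi.mul_apply]
    rw [← ENNReal.ofReal_mul (by positivity), ← ENNReal.ofReal_mul (by positivity),
      ← ENNReal.ofReal_mul (by positivity), ← ENNReal.ofReal_mul (by positivity)]
    congr 1
    rw [Real.exp_neg]
    have := (Real.exp_pos (μ h S)).ne'
    field_simp
  set W : H × ((Fin m → Z) × H) → ENNReal := fun p =>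
    E p.2.1 p.2.2 * A p.2.1 p.2.2 * B p.2.1 p.1 with hW
  have hWm : Measurable W := by
    have h1 : Measurable fun p : H × ((Fin m → Z) × H) => E p.2.1 p.2.2 := hEm.comp measurable_snd
    have h2 : Measurable fun p : H × ((Fin m → Z) × H) => A p.2.1 p.2.2 := hAm.comp measurable_snd
    have h3 : Measurable fun p : H × ((Fin m → Z) × H) => B p.2.1 p.1 :=
      hBm.comp (measurable_snd.fst.prodMk measurable_fst)
    exact (h1.mul h2).mul h3
  have hZm : Measurable fun S => ENNReal.ofReal (ZS S) := by
    simp_rw [← hBint]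
    exact hBm.lintegral_prod_right
  have hWint : ∫⁻ p, W p ∂(Pm.prod (Measure.pi (fun _ : Fin m => D) ⊗ₘ κ))
      ≤ ENNReal.ofReal (8 * Real.sqrt m) := by
    rw [lintegral_prod_symm' _ hWm]
    have e1 : ∀ y : (Fin m → Z) × H, ∫⁻ x, W (x, y) ∂Pm =
        E y.1 y.2 * A y.1 y.2 * ENNReal.ofReal (ZS y.1) := by
      intro y
      simp only [hW]
      rw [lintegral_const_mul _ hBm.of_uncurry_left, hBint]
    simp_rw [e1]
    have hmeas : Measurable fun y : (Fin m → Z) × H =>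
        E y.1 y.2 * A y.1 y.2 * ENNReal.ofReal (ZS y.1) :=
      (hEm.mul hAm).mul (hZm.comp measurable_fst)
    rw [Measure.lintegral_compProd hmeas]
    simp_rw [hAint]
    rw [lintegral_lintegral_swap hEm.aemeasurable]
    calc _ ≤ ∫⁻ h, ENNReal.ofReal (8 * Real.sqrt m) ∂Pm := by
          refine lintegral_mono fun h => ?_
          exact maurer D m hm (ℓ h) hℓ.of_uncurry_left (hℓ01 h)
      _ = _ := by simp
  set ν := Pm.prod (Measure.pi (fun _ : Fin m => D) ⊗ₘ κ) with hν
  have hmark := mul_meas_ge_le_lintegral (μ := ν) hWm (ENNReal.ofReal (8 * Real.sqrt m / δ))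
  have hbad : ν {p | ENNReal.ofReal (8 * Real.sqrt m / δ) ≤ W p} ≤ ENNReal.ofReal δ := by
    have h8 : 0 < 8 * Real.sqrt m / δ := by positivity
    have := hmark.trans hWint
    rw [mul_comm, ← ENNReal.le_div_iff_mul_le (Or.inl (by simpa using h8))
      (Or.inl ENNReal.ofReal_ne_top), ← ENNReal.ofReal_div_of_pos h8] at this
    refine this.trans (le_of_eq ?_)
    congr 1
    field_simp
  rw [tsub_le_iff_right]
  have huniv := measure_univ_le_add_compl (μ := ν) {p : H × ((Fin m → Z) × H) |
          binKL (empRisk ℓ p.2.2 p.2.1) (trueRisk D ℓ p.2.2) ≤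
            (1 / m) * (μ p.1 p.2.1 - μ p.2.2 p.2.1
              + Real.log (P p.1 / P p.2.2)
              + Real.log (8 * Real.sqrt m / δ^2)) }
  rw [measure_univ] at huniv
  refine huniv.trans ?_
  gcongr
  refine (measure_mono ?_).trans hbad
  rintro ⟨h', S, h⟩ hp
  simp only [Set.mem_compl_iff, Set.mem_ofPred_eq, not_le] at hp ⊢
  have hP := hPpos h
  have hP' := hPpos h'
  simp only [hW, hE, hA, hB]
  rw [← ENNReal.ofReal_mul (by positivity), ← ENNReal.ofReal_mul (by positivity)]
  refine ENNReal.ofReal_le_ofReal ?_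
  rw [one_div, inv_mul_lt_iff₀ hm0] at hp
  set k := binKL (empRisk ℓ h S) (trueRisk D ℓ h)
  have hδ2 : 8 * Real.sqrt m / δ ≤ 8 * Real.sqrt m / δ^2 := by
    gcongr
    nlinarith
  refine hδ2.trans ?_
  have h9 : 0 < 8 * Real.sqrt m / δ^2 := by positivity
  have hlog : Real.log (8 * Real.sqrt m / δ^2) ≤ m * k + μ h S + Real.log (P h) + (-(μ h' S) - Real.log (P h')) := by
    rw [Real.log_div hP'.ne' hP.ne'] at hp
    linarith
  rw [Real.log_le_iff_le_exp h9, Real.exp_add, Real.exp_add, Real.exp_add, Real.exp_sub,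
    Real.exp_log hP, Real.exp_log hP'] at hlog
  refine hlog.trans (le_of_eq ?_)
  ring
end

section
/- Practical bound with uniform prior: Let H have finite positive reference measure λ(H) ∈ (0,∞) and let P be the uniform probability distribution on H (density 1/λ(H)). For any probability measure D on Z, any loss ℓ : H × Z → [0,1], any measurable parametric function μ : H × Z^m → ℝ with finite positive Gibbs normalizer, and any δ ∈ (0,1], with probability at least 1−δ over S ∼ D^m, h′ ∼ P, and h ∼ Q_S (Gibbs posterior for μ), one has kl(R_S^ℓ(h) ‖ R_D^ℓ(h)) ≤ (1/m)·[ μ(h′,S) − μ(h,S) + ln(8√m/δ²) ]. -/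
open MeasureTheory ProbabilityTheory

theorem aux_inv_sqrt_sum (n : ℕ) : ∑ k ∈ Finset.range (n+1), (1 / √(k:ℝ)) ≤ 2 * √(n:ℝ) := by
  induction n with
  | zero => simp
  | succ n ih =>
    rw [Finset.sum_range_succ]
    have h1 : 0 < √((n+1 : ℕ):ℝ) := Real.sqrt_pos.2 (by positivity)
    have h0 : 0 ≤ √((n : ℕ):ℝ) := Real.sqrt_nonneg _
    have e1 : √((n+1 : ℕ):ℝ)^2 = n + 1 := by rw [Real.sq_sqrt (by positivity)]; push_cast; ring
    have e0 : √((n : ℕ):ℝ)^2 = n := by rw [Real.sq_sqrt (by positivity)]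
    have : 1 / √((n+1 : ℕ):ℝ) ≤ 2 * √((n+1 : ℕ):ℝ) - 2 * √(n:ℝ) := by
      rw [div_le_iff₀ h1]
      nlinarith [sq_nonneg (√((n+1 : ℕ):ℝ) - √(n:ℝ))]
    linarith

theorem aux_stir_up (n : ℕ) (hn : 0 < n) :
    (n.factorial : ℝ) ≤ Real.exp 1 * √(n:ℝ) * (n / Real.exp 1)^n := by
  obtain ⟨k, rfl⟩ : ∃ k, n = k + 1 := ⟨n - 1, by omega⟩
  have h := Stirling.stirlingSeq'_antitone (Nat.zero_le k)
  simp only [Function.comp, Nat.succ_eq_add_one, zero_add, Stirling.stirlingSeq_one] at h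
  unfold Stirling.stirlingSeq at h
  have hp : 0 < √(2 * ((k+1 : ℕ):ℝ)) * (((k+1 : ℕ):ℝ) / Real.exp 1)^(k+1) := by positivity
  rw [div_le_iff₀ hp] at h
  refine h.trans (le_of_eq ?_)
  rw [Real.sqrt_mul (by norm_num)]
  field_simp

theorem aux_term (m k : ℕ) (hk : k ≤ m) :
    (m.choose k : ℝ) * ((k:ℝ)/m)^k * (1 - (k:ℝ)/m)^(m-k) ≤
      (1 / √(k:ℝ) + 1 / √((m-k:ℕ):ℝ)) + (if k = 0 then 1 else 0) + (if k = m then 1 else 0) := by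
  rcases Nat.eq_zero_or_pos k with rfl | hk0
  · have h1 : (0:ℝ) ≤ 1 / √((0:ℕ):ℝ) + 1 / √((m-0:ℕ):ℝ) := by positivity
    have h2 : (0:ℝ) ≤ (if (0:ℕ) = m then 1 else 0) := by split_ifs <;> norm_num
    have h3 : (m.choose 0 : ℝ) * (((0:ℕ):ℝ)/m)^0 * (1 - ((0:ℕ):ℝ)/m)^(m-0) = 1 := by simp
    rw [h3, if_pos rfl]
    linarith
  rcases hk.eq_or_lt with rfl | hlt
  · have : (k:ℝ) ≠ 0 := by positivity
    simp [this, hk0.ne']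
  obtain ⟨j, rfl⟩ : ∃ j, m = k + j := ⟨m - k, by omega⟩
  have hj0 : 0 < j := by omega
  have hm0 : 0 < k + j := by omega
  rw [if_neg (by omega), if_neg (by omega), add_zero, add_zero, Nat.add_sub_cancel_left]
  have e1 : 1 - (k:ℝ)/((k+j:ℕ):ℝ) = j / ((k+j:ℕ):ℝ) := by
    push_cast; field_simp; ring
  rw [e1, Nat.cast_add_choose]
  have hu := aux_stir_up (k+j) hm0
  have hk := Stirling.le_factorial_stirling k
  have hj := Stirling.le_factorial_stirling j
  have hmul := mul_le_mul hk hj (by positivity) (by positivity)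
  have hsk : 0 < √(k:ℝ) := by positivity
  have hsj : 0 < √(j:ℝ) := by positivity
  set M : ℝ := ((k+j:ℕ):ℝ) with hM
  have hMp : 0 < M := by positivity
  have hsM : √M ≤ √(k:ℝ) + √(j:ℝ) := by
    rw [hM]; push_cast
    exact Real.sqrt_le_iff.2 ⟨by positivity, by
      have := Real.sq_sqrt (Nat.cast_nonneg (α := ℝ) k)
      have := Real.sq_sqrt (Nat.cast_nonneg (α := ℝ) j)
      nlinarith [mul_pos hsk hsj]⟩
  have hexp : Real.exp 1 ≤ 2 * Real.pi := by
    have := Real.exp_one_lt_d9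
    have := Real.pi_gt_three
    linarith
  have hE : 0 < Real.exp 1 := Real.exp_pos 1
  -- assemble
  have rhs : 1 / √(k:ℝ) + 1 / √(j:ℝ) = (√(k:ℝ) + √(j:ℝ)) / (√(k:ℝ) * √(j:ℝ)) := by
    field_simp; ring
  rw [rhs]
  have hs2 : √(2 * Real.pi * k) * √(2 * Real.pi * j) = 2 * Real.pi * (√(k:ℝ) * √(j:ℝ)) := by
    rw [Real.sqrt_mul (x := 2 * Real.pi) (by positivity) (k:ℝ),
      Real.sqrt_mul (x := 2 * Real.pi) (by positivity) (j:ℝ)]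
    have := Real.mul_self_sqrt (show 0 ≤ 2 * Real.pi by positivity)
    linear_combination (√(k:ℝ) * √(j:ℝ)) * this
  have hlow : 2 * Real.pi * (√(k:ℝ) * √(j:ℝ)) * ((k:ℝ)^k * (j:ℝ)^j / Real.exp 1^(k+j)) ≤
      (k.factorial : ℝ) * j.factorial := by
    refine le_trans (le_of_eq ?_) hmul
    rw [← hs2, div_pow, div_pow, pow_add]; field_simp
  have hup : ((k+j).factorial : ℝ) * ((k:ℝ)^k * (j:ℝ)^j / M^(k+j)) ≤
      Real.exp 1 * √M * ((k:ℝ)^k * (j:ℝ)^j / Real.exp 1^(k+j)) := by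
    refine (mul_le_mul_of_nonneg_right hu (by positivity)).trans (le_of_eq ?_)
    rw [div_pow]; field_simp
  have e2 : ((k+j).factorial : ℝ) / ((k.factorial : ℝ) * j.factorial) * ((k:ℝ)/M)^k * ((j:ℝ)/M)^j
     = ((k+j).factorial : ℝ) * ((k:ℝ)^k * (j:ℝ)^j / M^(k+j)) / ((k.factorial : ℝ) * j.factorial) := by
    rw [div_pow, div_pow, pow_add]; field_simp
  rw [e2, div_le_div_iff₀ (by positivity) (by positivity)]
  set A := ((k:ℝ)^k * (j:ℝ)^j / Real.exp 1^(k+j)) with hA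
  have hA0 : 0 < A := by positivity
  calc _ ≤ Real.exp 1 * √M * A * (√(k:ℝ) * √(j:ℝ)) := by gcongr
    _ ≤ (2 * Real.pi) * (√(k:ℝ) + √(j:ℝ)) * A * (√(k:ℝ) * √(j:ℝ)) := by gcongr
    _ = (√(k:ℝ) + √(j:ℝ)) * (2 * Real.pi * (√(k:ℝ) * √(j:ℝ)) * A) := by ring
    _ ≤ _ := by gcongr

theorem aux_maurer_sum (m : ℕ) (hm : 0 < m) :
    ∑ k ∈ Finset.range (m+1), (m.choose k : ℝ) * ((k:ℝ)/m)^k * (1 - (k:ℝ)/m)^(m-k) ≤ 8 * √(m:ℝ) := by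
  refine (Finset.sum_le_sum fun k hk => aux_term m k (by simp at hk; omega)).trans ?_
  rw [Finset.sum_add_distrib, Finset.sum_add_distrib, Finset.sum_add_distrib]
  have h1 := aux_inv_sqrt_sum m
  have h2 : ∑ k ∈ Finset.range (m+1), (1 / √((m-k:ℕ):ℝ)) = ∑ k ∈ Finset.range (m+1), (1 / √(k:ℝ)) := by
    have := Finset.sum_range_reflect (fun k : ℕ => (1 / √(k:ℝ))) (m+1)
    simpa using this
  rw [h2]
  have h3 : (1:ℝ) ≤ √(m:ℝ) := Real.one_le_sqrt.2 (by exact_mod_cast hm)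
  simp only [Finset.sum_ite_eq', Finset.mem_range]
  rw [if_pos (by omega), if_pos (by omega)]
  linarith

/-- weights -/
theorem aux_weight_sum {m : ℕ} (x : Fin m → ℝ) :
    ∑ s : Finset (Fin m), (∏ i ∈ s, x i) * ∏ i ∈ sᶜ, (1 - x i) = 1 := by
  have := Fintype.prod_add x (fun i => 1 - x i)
  simp at this
  rw [← this]

theorem aux_weight_mean {m : ℕ} (x : Fin m → ℝ) :
    ∑ s : Finset (Fin m), ((∏ i ∈ s, x i) * ∏ i ∈ sᶜ, (1 - x i)) * ((s.card : ℝ) / m) =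
      (∑ i, x i) / m := by
  have key : ∀ i : Fin m, ∑ s : Finset (Fin m), ((∏ j ∈ s, x j) * ∏ j ∈ sᶜ, (1 - x j)) *
      (if i ∈ s then (1:ℝ) else 0) = x i := by
    intro i
    have h := Fintype.prod_add x (fun j => if j = i then 0 else 1 - x j)
    have h2 : ∏ j, (x j + if j = i then 0 else 1 - x j) = x i := by
      rw [Finset.prod_eq_single i]
      · simp
      · intro b _ hb; simp [hb]
      · simp
    rw [← h2, h]
    refine Finset.sum_congr rfl fun s _ => ?_
    by_cases hi : i ∈ s
    · rw [if_pos hi, mul_one]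
      congr 1
      refine Finset.prod_congr rfl fun j hj => ?_
      rw [if_neg]; rintro rfl; simp at hj; exact hj hi
    · rw [if_neg hi, mul_zero, eq_comm]
      rw [Finset.prod_eq_zero (i := i) (s := sᶜ) (by simpa using hi) (by simp), mul_zero]
  simp_rw [← mul_div_assoc]
  rw [← Finset.sum_div]
  congr 1
  have hc : ∀ s : Finset (Fin m), (s.card : ℝ) = ∑ i, if i ∈ s then (1:ℝ) else 0 := by
    intro s; simp
  simp_rw [hc, Finset.mul_sum]
  rw [Finset.sum_comm]
  exact Finset.sum_congr rfl fun i _ => key i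

theorem aux_convex (m : ℕ) (p : ℝ) (hp0 : 0 < p) (hp1 : p < 1) :
    ConvexOn ℝ (Set.Icc (0:ℝ) 1) (fun q => Real.exp (m * binKL q p)) := by
  have hE : ∀ q ∈ Set.Icc (0:ℝ) 1,
      -Real.binEntropy q + (q * (-Real.log p) + (1 - q) * (-Real.log (1 - p))) = binKL q p := by
    intro q hq
    have hp1' : 1 - p ≠ 0 := by linarith
    unfold binKL
    rw [Real.binEntropy, Real.log_inv, Real.log_inv]
    have h1 : q * Real.log (q / p) = q * (Real.log q - Real.log p) := by
      rcases eq_or_ne q 0 with rfl | h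
      · simp
      · rw [Real.log_div h hp0.ne']
    have h2 : (1 - q) * Real.log ((1 - q) / (1 - p)) = (1 - q) * (Real.log (1 - q) - Real.log (1 - p)) := by
      rcases eq_or_ne (1 - q) 0 with h | h
      · simp [h]
      · rw [Real.log_div h hp1']
    rw [h1, h2]; ring
  have hkl : ConvexOn ℝ (Set.Icc (0:ℝ) 1) (fun q => binKL q p) := by
    refine ConvexOn.congr ?_ hE
    refine (Real.strictConcave_binEntropy.concaveOn.neg).add ?_
    refine ⟨convex_Icc _ _, ?_⟩
    intro x _ y _ a b _ _ hab
    refine le_of_eq ?_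
    simp only [smul_eq_mul]
    have : b = 1 - a := by linarith
    subst this
    ring
  have h2 : ConvexOn ℝ (Set.Icc (0:ℝ) 1) (fun q => (m:ℝ) * binKL q p) := by
    simpa [smul_eq_mul] using hkl.smul (Nat.cast_nonneg (α := ℝ) m)
  refine ⟨convex_Icc _ _, ?_⟩
  intro x hx y hy a b ha hb hab
  refine (Real.exp_le_exp.2 (h2.2 hx hy ha hb hab)).trans ?_
  exact convexOn_exp.2 (Set.mem_univ _) (Set.mem_univ _) ha hb hab

theorem aux_exp_kl (m k : ℕ) (hm : 0 < m) (hk : k ≤ m) (p : ℝ) (hp0 : 0 < p) (hp1 : p < 1) :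
    p^k * (1-p)^(m-k) * Real.exp (m * binKL ((k:ℝ)/m) p) = ((k:ℝ)/m)^k * (1 - (k:ℝ)/m)^(m-k) := by
  have hmR : (m:ℝ) ≠ 0 := by positivity
  have hp1' : 0 < 1 - p := by linarith
  have e : (m:ℝ) * binKL ((k:ℝ)/m) p =
      k * Real.log ((k:ℝ)/m/p) + ((m-k:ℕ):ℝ) * Real.log ((1 - (k:ℝ)/m)/(1-p)) := by
    unfold binKL
    rw [Nat.cast_sub hk]
    field_simp
  have gen : ∀ (n : ℕ) (q r : ℝ), 0 < r → (n ≠ 0 → 0 < q) →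
      r^n * Real.exp (n * Real.log (q / r)) = q^n := by
    intro n q r hr hq
    rcases Nat.eq_zero_or_pos n with rfl | hn
    · simp
    · have := hq hn.ne'
      rw [Real.exp_nat_mul, Real.exp_log (by positivity), ← mul_pow]
      congr 1
      field_simp
  rw [e, Real.exp_add]
  have g1 := gen k ((k:ℝ)/m) p hp0 (fun h => by positivity)
  have g2 := gen (m-k) (1 - (k:ℝ)/m) (1-p) hp1' (fun h => by
    rw [sub_pos, div_lt_one (by positivity)]
    exact_mod_cast (by omega : k < m))
  rw [← g1, ← g2]; ring

theorem aux_mgf {Z : Type*} [MeasurableSpace Z] (m : ℕ) (hm : 0 < m)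
    (D : Measure Z) [IsProbabilityMeasure D] (f : Z → ℝ) (hf : Measurable f)
    (hf01 : ∀ z, f z ∈ Set.Icc (0:ℝ) 1) :
    ∫⁻ S, ENNReal.ofReal (Real.exp (m * binKL ((∑ i, f (S i)) / m) (∫ z, f z ∂D)))
      ∂(Measure.pi (fun _ : Fin m => D)) ≤ ENNReal.ofReal (8 * √(m:ℝ)) := by
  have hmR : (0:ℝ) < m := by positivity
  have h1s : (1:ℝ) ≤ √(m:ℝ) := Real.one_le_sqrt.2 (by exact_mod_cast hm)
  have hfi : Integrable f D := by
    refine Integrable.of_bound hf.aestronglyMeasurable 1 (Filter.Eventually.of_forall fun z => ?_)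
    rw [Real.norm_eq_abs, abs_le]; exact ⟨by linarith [(hf01 z).1], (hf01 z).2⟩
  set p := ∫ z, f z ∂D with hp
  have hp0 : 0 ≤ p := integral_nonneg fun z => (hf01 z).1
  have hp1 : p ≤ 1 := by
    have := integral_mono hfi (integrable_const (1:ℝ)) (fun z => (hf01 z).2)
    simpa using this
  -- degenerate case
  have degen : ∀ c : ℝ, (∀ᵐ z ∂D, f z = c) → binKL c p = 0 →
      ∫⁻ S, ENNReal.ofReal (Real.exp (m * binKL ((∑ i, f (S i)) / m) p))
      ∂(Measure.pi (fun _ : Fin m => D)) ≤ ENNReal.ofReal (8 * √(m:ℝ)) := by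
    intro c hc hk
    have hall : ∀ᵐ S ∂(Measure.pi (fun _ : Fin m => D)), ∀ i, f (S i) = c := by
      rw [ae_all_iff]
      intro i
      exact (measurePreserving_eval (fun _ : Fin m => D) i).quasiMeasurePreserving.ae hc
    have : ∫⁻ S, ENNReal.ofReal (Real.exp (m * binKL ((∑ i, f (S i)) / m) p))
      ∂(Measure.pi (fun _ : Fin m => D)) = ∫⁻ S, 1 ∂(Measure.pi (fun _ : Fin m => D)) := by
      refine lintegral_congr_ae ?_
      filter_upwards [hall] with S hS
      have : (∑ i, f (S i)) / m = c := by
        simp [hS]; field_simp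
      rw [this, hk]; simp
    rw [this, lintegral_one, measure_univ, ← ENNReal.ofReal_one]
    exact ENNReal.ofReal_le_ofReal (by linarith)
  rcases hp0.eq_or_lt with h0 | h0
  · refine degen 0 ?_ (by rw [← h0]; simp [binKL])
    exact (integral_eq_zero_iff_of_nonneg (fun z => (hf01 z).1) hfi).1 (by rw [← hp, ← h0])
  rcases hp1.eq_or_lt with h1 | h1
  · refine degen 1 ?_ (by rw [h1]; simp [binKL])
    have := (integral_eq_zero_iff_of_nonneg (f := fun z => 1 - f z)
      (fun z => by simpa using (hf01 z).2) ((integrable_const 1).sub hfi)).1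
      (by rw [integral_sub (integrable_const 1) hfi, ← hp, h1]; simp)
    filter_upwards [this] with z hz
    simp at hz; linarith
  -- main case
  set g : ℝ → ℝ := fun q => Real.exp (m * binKL q p) with hg
  have hconv : ConvexOn ℝ (Set.Icc (0:ℝ) 1) g := aux_convex m p h0 h1
  set W : Finset (Fin m) → (Fin m → Z) → ℝ := fun s S =>
    (∏ i ∈ s, f (S i)) * ∏ i ∈ sᶜ, (1 - f (S i)) with hW
  have hWnn : ∀ s S, 0 ≤ W s S := fun s S =>
    mul_nonneg (Finset.prod_nonneg fun i _ => (hf01 _).1)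
      (Finset.prod_nonneg fun i _ => by linarith [(hf01 (S i)).2])
  have hpt : ∀ S : Fin m → Z, g ((∑ i, f (S i)) / m) ≤
      ∑ s : Finset (Fin m), W s S * g ((s.card : ℝ)/m) := by
    intro S
    have := hconv.map_sum_le (t := Finset.univ) (w := fun s : Finset (Fin m) => W s S)
      (p := fun s => (s.card : ℝ)/m) (fun s _ => hWnn s S)
      (aux_weight_sum (fun i => f (S i))) (fun s _ => by
        refine ⟨by positivity, ?_⟩
        rw [div_le_one hmR]
        have := s.card_le_univ
        simp at this
        exact_mod_cast this)
    simp only [smul_eq_mul] at this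
    rw [aux_weight_mean (fun i => f (S i))] at this
    exact this
  have hWprod : ∀ s S, W s S = ∏ i, (if i ∈ s then f (S i) else 1 - f (S i)) := by
    intro s S
    rw [Finset.prod_ite]
    have e1 : (Finset.univ.filter (fun i => i ∈ s)) = s := by ext; simp
    have e2 : (Finset.univ.filter (fun i => i ∉ s)) = sᶜ := by ext; simp
    rw [e1, e2]
  have hWint : ∀ s, ∫ S, W s S ∂(Measure.pi (fun _ : Fin m => D)) = p^s.card * (1-p)^(m - s.card) := by
    intro s
    simp_rw [hWprod]
    rw [integral_fintype_prod_eq_prod (fun i z => if i ∈ s then f z else 1 - f z)]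
    have : ∀ i : Fin m, ∫ z, (if i ∈ s then f z else 1 - f z) ∂D = if i ∈ s then p else 1 - p := by
      intro i
      split_ifs
      · rfl
      · rw [integral_sub (integrable_const 1) hfi]; simp [hp]
    simp_rw [this]
    rw [Finset.prod_ite, Finset.prod_const, Finset.prod_const]
    have e1 : (Finset.univ.filter (fun i => i ∈ s)) = s := by ext; simp
    have e2 : (Finset.univ.filter (fun i => i ∉ s)) = sᶜ := by ext; simp
    rw [e1, e2, Finset.card_compl, Fintype.card_fin]
  have hWmeas : ∀ s, Measurable (W s) := by
    intro s
    have : W s = fun S => ∏ i, (if i ∈ s then f (S i) else 1 - f (S i)) := funext (hWprod s)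
    rw [this]
    refine Finset.measurable_fun_prod _ fun i _ => ?_
    split_ifs
    · exact hf.comp (measurable_pi_apply i)
    · exact measurable_const.sub (hf.comp (measurable_pi_apply i))
  have hWle : ∀ s S, W s S ≤ 1 := by
    intro s S
    rw [hWprod]
    refine Finset.prod_le_one (fun i _ => ?_) (fun i _ => ?_)
    · split_ifs <;> linarith [(hf01 (S i)).1, (hf01 (S i)).2]
    · split_ifs <;> linarith [(hf01 (S i)).1, (hf01 (S i)).2]
  have hWi : ∀ s, Integrable (W s) (Measure.pi (fun _ : Fin m => D)) := by
    intro s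
    refine Integrable.of_bound (hWmeas s).aestronglyMeasurable 1 (Filter.Eventually.of_forall fun z => ?_)
    rw [Real.norm_eq_abs, abs_le]; exact ⟨by linarith [hWnn s z], hWle s z⟩
  calc ∫⁻ S, ENNReal.ofReal (g ((∑ i, f (S i)) / m)) ∂(Measure.pi (fun _ : Fin m => D))
      ≤ ∫⁻ S, ENNReal.ofReal (∑ s : Finset (Fin m), W s S * g ((s.card : ℝ)/m))
          ∂(Measure.pi (fun _ : Fin m => D)) :=
        lintegral_mono fun S => ENNReal.ofReal_le_ofReal (hpt S)
    _ = ENNReal.ofReal (∫ S, ∑ s : Finset (Fin m), W s S * g ((s.card : ℝ)/m)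
          ∂(Measure.pi (fun _ : Fin m => D))) := by
        rw [ofReal_integral_eq_lintegral_ofReal]
        · exact integrable_finsetSum _ fun s _ => (hWi s).mul_const _
        · exact Filter.Eventually.of_forall fun S => Finset.sum_nonneg fun s _ =>
            mul_nonneg (hWnn s S) (Real.exp_pos _).le
    _ ≤ ENNReal.ofReal (8 * √(m:ℝ)) := by
        refine ENNReal.ofReal_le_ofReal ?_
        rw [integral_finsetSum _ fun s _ => (hWi s).mul_const _]
        simp_rw [integral_mul_const, hWint]
        have h := Finset.sum_powerset_apply_card
          (fun k => p^k * (1-p)^(m-k) * g ((k:ℝ)/m)) (x := (Finset.univ : Finset (Fin m)))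
        rw [Finset.powerset_univ, Finset.card_univ, Fintype.card_fin] at h
        rw [h]
        refine le_trans (le_of_eq ?_) (aux_maurer_sum m hm)
        refine Finset.sum_congr rfl fun k hk => ?_
        have hk' : k ≤ m := by simp at hk; omega
        rw [aux_exp_kl m k hm hk' p h0 h1, nsmul_eq_mul]; ring

/-- **Practical bound with uniform prior.**  `H` has finite positive reference
measure and `P` is the uniform probability distribution on `H`.  With
probability at least `1−δ` over `S ∼ D^m`, `h′ ∼ P` and `h ∼ Q_S`
(Gibbs posterior for `μ`),
`kl(R_S^ℓ(h) ‖ R_D^ℓ(h)) ≤ (1/m)·[μ(h′,S) − μ(h,S) + ln(8√m/δ²)]`. -/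
theorem gibbs_complexity_kl_bound_uniform_prior
    {Z H : Type*} [MeasurableSpace Z] [MeasurableSpace H]
    (m : ℕ) (hm : 0 < m)
    (D : Measure Z) [IsProbabilityMeasure D]
    (lam : Measure H)
    (hlam_pos : 0 < lam Set.univ) (hlam_fin : lam Set.univ < ⊤)
    (ℓ : H → Z → ℝ) (hℓ : Measurable (Function.uncurry ℓ))
    (hℓ01 : ∀ h z, ℓ h z ∈ Set.Icc (0:ℝ) 1)
    (μ : H → (Fin m → Z) → ℝ) (hμ : Measurable (Function.uncurry μ))
    (hμint : ∀ S, Integrable (fun g => Real.exp (-(μ g S))) lam)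
    (hZpos : ∀ S : Fin m → Z, 0 < ∫ g, Real.exp (-(μ g S)) ∂lam)
    (κ : Kernel (Fin m → Z) H) [IsMarkovKernel κ]
    (hκ : ∀ S, κ S = lam.withDensity fun h =>
      ENNReal.ofReal (Real.exp (-(μ h S)) / ∫ g, Real.exp (-(μ g S)) ∂lam))
    (δ : ℝ) (hδ : δ ∈ Set.Ioc (0:ℝ) 1) :
    1 - ENNReal.ofReal δ ≤
      ((((lam Set.univ)⁻¹ • lam).prod
          (Measure.pi (fun _ : Fin m => D) ⊗ₘ κ))
        {p : H × ((Fin m → Z) × H) |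
          binKL (empRisk ℓ p.2.2 p.2.1) (trueRisk D ℓ p.2.2) ≤
            (1 / m) * (μ p.1 p.2.1 - μ p.2.2 p.2.1
              + Real.log (8 * Real.sqrt m / δ^2)) }) := by
  obtain ⟨hδ0, hδ1⟩ := hδ
  have hfin : IsFiniteMeasure lam := ⟨hlam_fin⟩
  set c : ℝ := (lam Set.univ).toReal with hc
  have hcpos : 0 < c := ENNReal.toReal_pos hlam_pos.ne' hlam_fin.ne
  have hcof : lam Set.univ = ENNReal.ofReal c := (ENNReal.ofReal_toReal hlam_fin.ne).symm
  set P : Measure H := (lam Set.univ)⁻¹ • lam with hP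
  have hPprob : IsProbabilityMeasure P := ⟨by
    rw [hP, Measure.smul_apply, smul_eq_mul]
    exact ENNReal.inv_mul_cancel hlam_pos.ne' hlam_fin.ne⟩
  set ν : Measure (Fin m → Z) := Measure.pi (fun _ : Fin m => D) with hν
  set N : (Fin m → Z) → ℝ := fun S => ∫ g, Real.exp (-(μ g S)) ∂lam with hN
  have hNmeas : Measurable N := by
    have : StronglyMeasurable (fun q : (Fin m → Z) × H => Real.exp (-(μ q.2 q.1))) :=
      (Real.measurable_exp.comp (hμ.comp measurable_swap).neg).stronglyMeasurable
    exact (this.integral_prod_right' (ν := lam)).measurable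
  have hTmeas : Measurable (fun h => trueRisk D ℓ h) := by
    have : StronglyMeasurable (Function.uncurry ℓ) := hℓ.stronglyMeasurable
    exact (this.integral_prod_right' (ν := D)).measurable
  have hEmeas : Measurable (fun q : (Fin m → Z) × H => empRisk ℓ q.2 q.1) := by
    unfold empRisk
    refine Measurable.div_const ?_ _
    refine Finset.measurable_fun_sum _ fun i _ => ?_
    exact hℓ.comp (measurable_snd.prodMk ((measurable_pi_apply i).comp measurable_fst))
  have hKmeas : Measurable (fun q : (Fin m → Z) × H =>
      binKL (empRisk ℓ q.2 q.1) (trueRisk D ℓ q.2)) := by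
    have h2 := hTmeas.comp (measurable_snd : Measurable (Prod.snd : (Fin m → Z) × H → H))
    unfold binKL
    exact (hEmeas.mul (Real.measurable_log.comp (hEmeas.div h2))).add
      ((measurable_const.sub hEmeas).mul (Real.measurable_log.comp
        ((measurable_const.sub hEmeas).div (measurable_const.sub h2))))
  set C : ℝ := 8 * √(m:ℝ) with hC
  have hmR : (0:ℝ) < m := by positivity
  have hCpos : 0 < C := by positivity
  set K : (Fin m → Z) × H → ℝ := fun q => Real.exp (m * binKL (empRisk ℓ q.2 q.1) (trueRisk D ℓ q.2)) with hK
  have hKm : Measurable K := Real.measurable_exp.comp (hKmeas.const_mul _)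
  set X : (Fin m → Z) × H → ℝ := fun q =>
    K q * Real.exp (μ q.2 q.1) * N q.1 / c / C with hX
  have hμ2 : Measurable (fun q : (Fin m → Z) × H => μ q.2 q.1) := hμ.comp measurable_swap
  have hXm : Measurable X := (((hKm.mul (Real.measurable_exp.comp hμ2)).mul
    (hNmeas.comp measurable_fst)).div_const _).div_const _
  set Y : H × (Fin m → Z) → ℝ := fun q => Real.exp (-(μ q.1 q.2)) * (c / N q.2) with hY
  have hYm : Measurable Y := (Real.measurable_exp.comp hμ.neg).mul
    (measurable_const.div (hNmeas.comp measurable_snd))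
  have hXpos : ∀ q, 0 < X q := fun q => by
    have := hZpos q.1
    have : 0 < N q.1 := this
    have : 0 < K q := Real.exp_pos _
    positivity
  have hYpos : ∀ q, 0 < Y q := fun q => by
    have : 0 < N q.2 := hZpos q.2
    positivity
  -- expectation of `X`
  have hEX : ∫⁻ q, ENNReal.ofReal (X q) ∂(ν ⊗ₘ κ) ≤ 1 := by
    rw [Measure.lintegral_compProd (Measurable.ennreal_ofReal hXm)]
    have hin : ∀ S, ∫⁻ h, ENNReal.ofReal (X (S, h)) ∂(κ S) =
        ∫⁻ h, ENNReal.ofReal (K (S, h) / c / C) ∂lam := by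
      intro S
      have hd : Measurable (fun h => ENNReal.ofReal (Real.exp (-(μ h S)) / N S)) :=
        Measurable.ennreal_ofReal ((Real.measurable_exp.comp
          (hμ.comp measurable_prodMk_right).neg).div_const _)
      have hXS : Measurable (fun h => ENNReal.ofReal (X (S, h))) :=
        Measurable.ennreal_ofReal (hXm.comp measurable_prodMk_left)
      have hκS : κ S = lam.withDensity fun h => ENNReal.ofReal (Real.exp (-(μ h S)) / N S) := hκ S
      rw [hκS, lintegral_withDensity_eq_lintegral_mul _ hd hXS]
      refine lintegral_congr fun h => ?_
      have hNp : 0 < N S := hZpos S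
      simp only [Pi.mul_apply, Function.comp]
      rw [← ENNReal.ofReal_mul (by positivity)]
      congr 1
      simp only [hX, Real.exp_neg]
      have := Real.exp_pos (μ h S)
      field_simp
    simp_rw [hin]
    rw [lintegral_lintegral_swap
      (Measurable.ennreal_ofReal ((hKm.div_const _).div_const _)).aemeasurable]
    have hb : ∀ h, ∫⁻ S, ENNReal.ofReal (K (S, h) / c / C) ∂ν ≤ ENNReal.ofReal (1 / c) := by
      intro h
      have hmg := aux_mgf m hm D (ℓ h) (hℓ.comp measurable_prodMk_left) (hℓ01 h)
      have : ∀ S, ENNReal.ofReal (K (S, h) / c / C) =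
          ENNReal.ofReal (1 / (c * C)) * ENNReal.ofReal (K (S, h)) := by
        intro S
        rw [← ENNReal.ofReal_mul (by positivity)]
        congr 1; field_simp
      simp_rw [this]
      have hKh : Measurable (fun S => ENNReal.ofReal (K (S, h))) :=
        Measurable.ennreal_ofReal (hKm.comp measurable_prodMk_right)
      rw [lintegral_const_mul _ hKh]
      calc _ ≤ ENNReal.ofReal (1 / (c * C)) * ENNReal.ofReal C := by
            gcongr
            exact hmg
        _ = ENNReal.ofReal (1 / c) := by
            rw [← ENNReal.ofReal_mul (by positivity)]
            congr 1; field_simp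
    refine (lintegral_mono hb).trans (le_of_eq ?_)
    rw [lintegral_const, hcof, ← ENNReal.ofReal_mul (by positivity)]
    rw [one_div, inv_mul_cancel₀ hcpos.ne', ENNReal.ofReal_one]
  -- expectation of `Y`
  have hEY : ∀ S, ∫⁻ h, ENNReal.ofReal (Y (h, S)) ∂P = 1 := by
    intro S
    have hNp : 0 < N S := hZpos S
    rw [hP, lintegral_smul_measure, ← ofReal_integral_eq_lintegral_ofReal
      (f := fun h => Y (h, S)) ((hμint S).mul_const (c / N S)) (Filter.Eventually.of_forall fun h => (hYpos (h, S)).le)]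
    simp only [hY]
    rw [integral_mul_const]
    change (lam Set.univ)⁻¹ • ENNReal.ofReal (N S * (c / N S)) = 1
    rw [mul_div_cancel₀ _ hNp.ne', ← hcof, smul_eq_mul]
    exact ENNReal.inv_mul_cancel hlam_pos.ne' hlam_fin.ne
  set PP : Measure (H × ((Fin m → Z) × H)) := P.prod (ν ⊗ₘ κ) with hPP
  set F : H × ((Fin m → Z) × H) → ENNReal := fun p =>
    ENNReal.ofReal (X p.2) + ENNReal.ofReal (Y (p.1, p.2.1)) with hF
  have hF1 : Measurable (fun p : H × ((Fin m → Z) × H) => ENNReal.ofReal (X p.2)) :=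
    Measurable.ennreal_ofReal (hXm.comp measurable_snd)
  have hF2 : Measurable (fun p : H × ((Fin m → Z) × H) => ENNReal.ofReal (Y (p.1, p.2.1))) :=
    Measurable.ennreal_ofReal (hYm.comp
      (measurable_fst.prodMk (measurable_fst.comp measurable_snd)))
  have hFint : ∫⁻ p, F p ∂PP ≤ 2 := by
    rw [hF, lintegral_add_left hF1, ← one_add_one_eq_two]
    refine add_le_add ?_ ?_
    · rw [hPP, lintegral_prod _ hF1.aemeasurable]
      simp only [lintegral_const, measure_univ, mul_one]
      exact hEX
    · rw [hPP, lintegral_prod_symm _ hF2.aemeasurable]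
      simp only [hEY, lintegral_const, measure_univ, mul_one]
      exact le_rfl
  set G : Set (H × ((Fin m → Z) × H)) := {p |
          binKL (empRisk ℓ p.2.2 p.2.1) (trueRisk D ℓ p.2.2) ≤
            (1 / m) * (μ p.1 p.2.1 - μ p.2.2 p.2.1
              + Real.log (8 * Real.sqrt m / δ^2)) } with hG
  have hGm : MeasurableSet G := by
    refine measurableSet_le (hKmeas.comp measurable_snd) ?_
    refine Measurable.const_mul ?_ _
    refine Measurable.add_const ?_ _
    exact (hμ.comp (measurable_fst.prodMk (measurable_fst.comp measurable_snd))).sub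
      (hμ2.comp measurable_snd)
  have hsub : Gᶜ ⊆ {p | ENNReal.ofReal (2 / δ) ≤ F p} := by
    intro p hp
    simp only [hG, Set.mem_compl_iff, Set.mem_ofPred_eq, not_le] at hp
    simp only [Set.mem_ofPred_eq, hF]
    have hx := hXpos p.2
    have hy := hYpos (p.1, p.2.1)
    rw [← ENNReal.ofReal_add hx.le hy.le]
    refine ENNReal.ofReal_le_ofReal ?_
    have hNp : 0 < N p.2.1 := hZpos p.2.1
    have hxy : X p.2 * Y (p.1, p.2.1) = K p.2 * Real.exp (μ p.2.2 p.2.1) *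
        Real.exp (-(μ p.1 p.2.1)) / C := by
      simp only [hX, hY]
      field_simp
    have hbig : 1 / δ^2 ≤ X p.2 * Y (p.1, p.2.1) := by
      rw [hxy, le_div_iff₀ hCpos]
      simp only [hK]
      rw [← Real.exp_add, ← Real.exp_add]
      have h1 : 1 / δ^2 * C = Real.exp (Real.log (C / δ^2)) := by
        rw [Real.exp_log (by positivity)]; ring
      rw [h1]
      refine Real.exp_le_exp.2 ?_
      rw [one_div, inv_mul_lt_iff₀ hmR] at hp
      linarith
    rw [div_le_iff₀ hδ0]
    have hb2 : 1 ≤ (X p.2 * δ) * (Y (p.1, p.2.1) * δ) := by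
      rw [div_le_iff₀ (by positivity)] at hbig
      linarith
    have : 0 < X p.2 * δ := by positivity
    have : 0 < Y (p.1, p.2.1) * δ := by positivity
    nlinarith [sq_nonneg (X p.2 * δ - Y (p.1, p.2.1) * δ)]
  have hbad : PP Gᶜ ≤ ENNReal.ofReal δ := by
    have hM := mul_meas_ge_le_lintegral (μ := PP) (hF1.add hF2) (ENNReal.ofReal (2 / δ))
    have h2 : ENNReal.ofReal (2 / δ) * PP Gᶜ ≤ 2 :=
      (mul_le_mul_right (measure_mono hsub) _).trans (hM.trans hFint)
    have h3 : ENNReal.ofReal (δ / 2) * (ENNReal.ofReal (2 / δ) * PP Gᶜ) ≤ ENNReal.ofReal (δ / 2) * 2 :=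
      mul_le_mul_right h2 _
    rw [← mul_assoc, ← ENNReal.ofReal_mul (by positivity)] at h3
    have e1 : δ / 2 * (2 / δ) = 1 := by field_simp
    have e2 : ENNReal.ofReal (δ / 2) * 2 = ENNReal.ofReal δ := by
      rw [show (2:ENNReal) = ENNReal.ofReal 2 by simp, ← ENNReal.ofReal_mul (by positivity)]
      congr 1; ring
    rw [e1, e2, ENNReal.ofReal_one, one_mul] at h3
    exact h3
  have hcomp : PP G = 1 - PP Gᶜ := by
    have := prob_compl_eq_one_sub (μ := PP) hGm.compl
    rwa [compl_compl] at this
  rw [hcomp]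
  exact tsub_le_tsub_left hbad 1
end

section
/- Refined Lee-et-al. bound via Dvoretzky–Kiefer–Wolfowitz: Let ℓ : H × Z → [0,1] be a measurable loss, μ : H × Z^m → ℝ a measurable parametric function, and S ↦ Q_S any posterior Markov kernel. Fix n ≥ 1 and draw (S₁,h₁),…,(Sₙ,hₙ) i.i.d. from D^m ⊗ Q (so Sᵢ ∼ D^m and hᵢ ∼ Q_{Sᵢ}). For any δ ∈ (0,1], with probability at least 1−δ over these n pairs, for every ε > 0: P_{S∼D^m, h∼Q_S}[ |R_D^ℓ(h) − R_S^ℓ(h)| ≤ μ(h,S) + ε ] ≥ 1 − (1/n)·Σ_{i=1}^n 1[ |R_D^ℓ(hᵢ) − R_{Sᵢ}^ℓ(hᵢ)| − μ(hᵢ,Sᵢ) > ε ] − √(ln(2/δ)/(2n)). -/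
open MeasureTheory ProbabilityTheory

theorem dkwA_eq (t : ℝ) : (4)*t^0 + (-12)*t^1 + (136/9)*t^2 + (-88/9)*t^3 + (29/9)*t^4 + (-4/9)*t^5 = (4)*(t)^0*(1-t)^5 + (8)*(t)^1*(1-t)^4 + (64/9)*(t)^2*(1-t)^3 + (32/9)*(t)^3*(1-t)^2 + (1)*(t)^4*(1-t)^1 + (1/9)*(t)^5*(1-t)^0 := by ring

theorem dkwS_eq (t : ℝ) : (4)*t^0 + (-32)*t^1 + (344/3)*t^2 + (-6448/27)*t^3 + (2891/9)*t^4 + (-23876/81)*t^5 + (15374/81)*t^6 + (-7010/81)*t^7 + (2240/81)*t^8 + (-161/27)*t^9 + (64/81)*t^10 + (-4/81)*t^11 = (4)*(t)^0*(1-t)^11 + (12)*(t)^1*(1-t)^10 + (44/3)*(t)^2*(1-t)^9 + (356/27)*(t)^3*(1-t)^8 + (505/27)*(t)^4*(1-t)^7 + (2185/81)*(t)^5*(1-t)^6 + (2045/81)*(t)^6*(1-t)^5 + (1193/81)*(t)^7*(1-t)^4 + (433/81)*(t)^8*(1-t)^3 + (92/81)*(t)^9*(1-t)^2 + (1/9)*(t)^10*(1-t)^1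 := by ring

theorem dkwR_eq (t : ℝ) : (-8)*t^0 + (148/3)*t^1 + (-1088/9)*t^2 + (4363/27)*t^3 + (-3544/27)*t^4 + (1808/27)*t^5 + (-190/9)*t^6 + (34/9)*t^7 + (-8/27)*t^8 = (133/576)*(2*t-1)^0*(2-2*t)^8 + (1459/576)*(2*t-1)^1*(2-2*t)^7 + (3881/432)*(2*t-1)^2*(2-2*t)^6 + (7051/432)*(2*t-1)^3*(2-2*t)^5 + (3803/216)*(2*t-1)^4*(2-2*t)^4 + (2555/216)*(2*t-1)^5*(2-2*t)^3 + (527/108)*(2*t-1)^6*(2-2*t)^2 + (61/54)*(2*t-1)^7*(2-2*t)^1 + (1/9)*(2*t-1)^8*(2-2*t)^0 := by ring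

theorem dkwD_eq (t : ℝ) : (256/3)*t^0 + (-6800/9)*t^1 + (83632/27)*t^2 + (-23464/3)*t^3 + (1103024/81)*t^4 + (-12623161/729)*t^5 + (4033120/243)*t^6 + (-8886292/729)*t^7 + (5027852/729)*t^8 + (-727316/243)*t^9 + (715304/729)*t^10 + (-57292/243)*t^11 + (28636/729)*t^12 + (-988/243)*t^13 + (16/81)*t^14 = (256/3)*(2*t)^0*(1-2*t)^14 + (7352/9)*(2*t)^1*(1-2*t)^13 + (97972/27)*(2*t)^2*(1-2*t)^12 + (89185/9)*(2*t)^3*(1-2*t)^11 + (1504934/81)*(2*t)^4*(1-2*t)^10 + (589869671/23328)*(2*t)^5*(1-2*t)^9 + (200178053/7776)*(2*t)^6*(1-2*t)^8 + (464221367/23328)*(2*t)^7*(1-2*t)^7 + (2251031/192)*(2*t)^8*(1-2*t)^6 + (54238961/10368)*(2*t)^9*(1-2*t)^5 + (5064769/2916)*(2*t)^10*(1-2*t)^4 + (154884559/373248)*(2*t)^11*(1-2*t)^3 + (50146897/746496)*(2*t)^12*(1-2*t)^2 + (9789595/1492992)*(2*t)^13*(1-2*t)^1 + (430583/1492992)*(2*t)^14*(1-2*t)^0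 := by ring

theorem dkw_poly (t u : ℝ) (ht0 : 0 ≤ t) (ht1 : t ≤ 1) (hu0 : 0 ≤ u) (hu1 : u ≤ 1) :
    0 ≤ ((4)*t^0 + (-12)*t^1 + (136/9)*t^2 + (-88/9)*t^3 + (29/9)*t^4 + (-4/9)*t^5) + ((-16)*t^0 + (220/3)*t^1 + (-1360/9)*t^2 + (4891/27)*t^3 + (-3718/27)*t^4 + (1832/27)*t^5 + (-190/9)*t^6 + (34/9)*t^7 + (-8/27)*t^8) * u + ((16)*t^0 + (-280/3)*t^1 + (752/3)*t^2 + (-11075/27)*t^3 + (12304/27)*t^4 + (-29336/81)*t^5 + (17084/81)*t^6 + (-7316/81)*t^7 + (2264/81)*t^8 + (-161/27)*t^9 + (64/81)*t^10 + (-4/81)*t^11) * u^2 := by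
  have h1 : 0 ≤ 1 - t := by linarith
  have h2 : 0 ≤ 1 - u := by linarith
  rcases le_total t (1/2) with h | h
  · have h3 : 0 ≤ 1 - 2 * t := by linarith
    have h4 : 0 < 1 - t := by linarith
    have hA : 0 < (4)*t^0 + (-12)*t^1 + (136/9)*t^2 + (-88/9)*t^3 + (29/9)*t^4 + (-4/9)*t^5 := by
      rw [dkwA_eq]; positivity
    have hD : 0 ≤ (256/3)*t^0 + (-6800/9)*t^1 + (83632/27)*t^2 + (-23464/3)*t^3 + (1103024/81)*t^4 + (-12623161/729)*t^5 + (4033120/243)*t^6 + (-8886292/729)*t^7 + (5027852/729)*t^8 + (-727316/243)*t^9 + (715304/729)*t^10 + (-57292/243)*t^11 + (28636/729)*t^12 + (-988/243)*t^13 + (16/81)*t^14 := by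
      rw [dkwD_eq]; positivity
    have key : 4 * ((4)*t^0 + (-12)*t^1 + (136/9)*t^2 + (-88/9)*t^3 + (29/9)*t^4 + (-4/9)*t^5) * (((4)*t^0 + (-12)*t^1 + (136/9)*t^2 + (-88/9)*t^3 + (29/9)*t^4 + (-4/9)*t^5) + ((-16)*t^0 + (220/3)*t^1 + (-1360/9)*t^2 + (4891/27)*t^3 + (-3718/27)*t^4 + (1832/27)*t^5 + (-190/9)*t^6 + (34/9)*t^7 + (-8/27)*t^8) * u + ((16)*t^0 + (-280/3)*t^1 + (752/3)*t^2 + (-11075/27)*t^3 + (12304/27)*t^4 + (-29336/81)*t^5 + (17084/81)*t^6 + (-7316/81)*t^7 + (2264/81)*t^8 + (-161/27)*t^9 + (64/81)*t^10 + (-4/81)*t^11) * u^2)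
       = (2 * ((4)*t^0 + (-12)*t^1 + (136/9)*t^2 + (-88/9)*t^3 + (29/9)*t^4 + (-4/9)*t^5) + ((-16)*t^0 + (220/3)*t^1 + (-1360/9)*t^2 + (4891/27)*t^3 + (-3718/27)*t^4 + (1832/27)*t^5 + (-190/9)*t^6 + (34/9)*t^7 + (-8/27)*t^8) * u)^2 + t * u^2 * ((256/3)*t^0 + (-6800/9)*t^1 + (83632/27)*t^2 + (-23464/3)*t^3 + (1103024/81)*t^4 + (-12623161/729)*t^5 + (4033120/243)*t^6 + (-8886292/729)*t^7 + (5027852/729)*t^8 + (-727316/243)*t^9 + (715304/729)*t^10 + (-57292/243)*t^11 + (28636/729)*t^12 + (-988/243)*t^13 + (16/81)*t^14) := by ring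
    have h5 : 0 ≤ (2 * ((4)*t^0 + (-12)*t^1 + (136/9)*t^2 + (-88/9)*t^3 + (29/9)*t^4 + (-4/9)*t^5) + ((-16)*t^0 + (220/3)*t^1 + (-1360/9)*t^2 + (4891/27)*t^3 + (-3718/27)*t^4 + (1832/27)*t^5 + (-190/9)*t^6 + (34/9)*t^7 + (-8/27)*t^8) * u)^2 + t * u^2 * ((256/3)*t^0 + (-6800/9)*t^1 + (83632/27)*t^2 + (-23464/3)*t^3 + (1103024/81)*t^4 + (-12623161/729)*t^5 + (4033120/243)*t^6 + (-8886292/729)*t^7 + (5027852/729)*t^8 + (-727316/243)*t^9 + (715304/729)*t^10 + (-57292/243)*t^11 + (28636/729)*t^12 + (-988/243)*t^13 + (16/81)*t^14) := by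
      have := mul_nonneg (mul_nonneg ht0 (sq_nonneg u)) hD
      have := sq_nonneg (2 * ((4)*t^0 + (-12)*t^1 + (136/9)*t^2 + (-88/9)*t^3 + (29/9)*t^4 + (-4/9)*t^5) + ((-16)*t^0 + (220/3)*t^1 + (-1360/9)*t^2 + (4891/27)*t^3 + (-3718/27)*t^4 + (1832/27)*t^5 + (-190/9)*t^6 + (34/9)*t^7 + (-8/27)*t^8) * u)
      linarith
    rw [← key] at h5
    exact nonneg_of_mul_nonneg_right h5 (by linarith)
  · have h3 : 0 ≤ 2 * t - 1 := by linarith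
    have h4 : 0 ≤ 2 - 2 * t := by linarith
    have hA : 0 ≤ (4)*t^0 + (-12)*t^1 + (136/9)*t^2 + (-88/9)*t^3 + (29/9)*t^4 + (-4/9)*t^5 := by
      rw [dkwA_eq]; positivity
    have hS : 0 ≤ (4)*t^0 + (-32)*t^1 + (344/3)*t^2 + (-6448/27)*t^3 + (2891/9)*t^4 + (-23876/81)*t^5 + (15374/81)*t^6 + (-7010/81)*t^7 + (2240/81)*t^8 + (-161/27)*t^9 + (64/81)*t^10 + (-4/81)*t^11 := by
      rw [dkwS_eq]; positivity
    have hR : 0 ≤ (-8)*t^0 + (148/3)*t^1 + (-1088/9)*t^2 + (4363/27)*t^3 + (-3544/27)*t^4 + (1808/27)*t^5 + (-190/9)*t^6 + (34/9)*t^7 + (-8/27)*t^8 := by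
      rw [dkwR_eq]; positivity
    have key : ((4)*t^0 + (-12)*t^1 + (136/9)*t^2 + (-88/9)*t^3 + (29/9)*t^4 + (-4/9)*t^5) + ((-16)*t^0 + (220/3)*t^1 + (-1360/9)*t^2 + (4891/27)*t^3 + (-3718/27)*t^4 + (1832/27)*t^5 + (-190/9)*t^6 + (34/9)*t^7 + (-8/27)*t^8) * u + ((16)*t^0 + (-280/3)*t^1 + (752/3)*t^2 + (-11075/27)*t^3 + (12304/27)*t^4 + (-29336/81)*t^5 + (17084/81)*t^6 + (-7316/81)*t^7 + (2264/81)*t^8 + (-161/27)*t^9 + (64/81)*t^10 + (-4/81)*t^11) * u^2 = ((4)*t^0 + (-12)*t^1 + (136/9)*t^2 + (-88/9)*t^3 + (29/9)*t^4 + (-4/9)*t^5) * (1-u)^2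
       + ((-8)*t^0 + (148/3)*t^1 + (-1088/9)*t^2 + (4363/27)*t^3 + (-3544/27)*t^4 + (1808/27)*t^5 + (-190/9)*t^6 + (34/9)*t^7 + (-8/27)*t^8) * (u * (1-u)) + ((4)*t^0 + (-32)*t^1 + (344/3)*t^2 + (-6448/27)*t^3 + (2891/9)*t^4 + (-23876/81)*t^5 + (15374/81)*t^6 + (-7010/81)*t^7 + (2240/81)*t^8 + (-161/27)*t^9 + (64/81)*t^10 + (-4/81)*t^11) * u^2 := by ring
    rw [key]
    have := mul_nonneg hA (sq_nonneg (1-u))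
    have := mul_nonneg hR (mul_nonneg hu0 h2)
    have := mul_nonneg hS (sq_nonneg u)
    linarith

/-- tilting parameter -/
noncomputable def dkwα (t : ℝ) : ℝ := 1 - 2*t + (4/3)*t^2 - (1/3)*t^3

theorem dkwα_pos {t : ℝ} (ht1 : t < 1) : 0 < dkwα t := by
  have : dkwα t = (1-t) * ((1 - t/2)^2 + t^2/12) := by unfold dkwα; ring
  rw [this]
  have h : 0 < 1 - t := by linarith
  have h' : 0 < 1 - t/2 := by linarith
  positivity

theorem dkwα_le {t : ℝ} (ht0 : 0 ≤ t) (ht1 : t < 1) : dkwα t ≤ 1 := by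
  have : dkwα t = 1 - t * (2 - 4/3*t + t^2/3) := by unfold dkwα; ring
  rw [this]
  have h : 0 ≤ 2 - 4/3*t + t^2/3 := by nlinarith
  nlinarith

theorem dkwα_deriv (t : ℝ) : HasDerivAt dkwα (-2 + (8/3)*t - t^2) t := by
  have h := ((((hasDerivAt_const t (1:ℝ)).sub ((hasDerivAt_id t).const_mul 2)).add
    (((hasDerivAt_id t).pow 2).const_mul (4/3))).sub (((hasDerivAt_id t).pow 3).const_mul (1/3)))
  refine (h.congr_deriv ?_)
  simp; ring

noncomputable def dkwψ (u t : ℝ) : ℝ :=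
  (u-t) * Real.log (dkwα t) + (1-u+t) * (Real.log (1 - dkwα t * u) - Real.log (1-u)) - 2*t^2

noncomputable def dkwψ1 (u t : ℝ) : ℝ :=
  Real.log (1 - dkwα t * u) - Real.log (1-u) - Real.log (dkwα t)
   + (-2 + (8/3)*t - t^2) * (u * (1 - dkwα t) - t) / (dkwα t * (1 - dkwα t * u)) - 4*t

theorem dkw_aux {u t : ℝ} (hu1 : u < 1) (hu0 : 0 ≤ u) (ht0 : 0 ≤ t) (ht1 : t < 1) :
    0 < 1 - dkwα t * u := by
  have := dkwα_le ht0 ht1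
  have := dkwα_pos ht1
  nlinarith

theorem dkwψ_deriv {u t : ℝ} (hu1 : u < 1) (hu0 : 0 ≤ u) (ht0 : 0 ≤ t) (ht1 : t < 1) :
    HasDerivAt (dkwψ u) (dkwψ1 u t) t := by
  have ha := dkwα_pos ht1
  have hb := dkw_aux hu1 hu0 ht0 ht1
  have hd := dkwα_deriv t
  have h := (((((hasDerivAt_const t u).sub (hasDerivAt_id t)).mul (hd.log ha.ne')).add
    (((hasDerivAt_const t (1-u)).add (hasDerivAt_id t)).mul
      ((((hasDerivAt_const t (1:ℝ)).sub (hd.mul_const u)).log hb.ne').sub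
        (hasDerivAt_const t (Real.log (1-u)))))).sub (((hasDerivAt_id t).pow 2).const_mul 2))
  refine (h.congr_deriv ?_)
  have ha' := ha.ne'
  have hb' := hb.ne'
  simp only [dkwψ1, Pi.sub_apply, Pi.add_apply, id]
  generalize hB : 1 - dkwα t * u = B at *
  generalize dkwα t = a at *
  field_simp
  subst hB
  norm_num
  ring

theorem dkwψ1_deriv {u t : ℝ} (hu1 : u < 1) (hu0 : 0 ≤ u) (ht0 : 0 ≤ t) (ht1 : t < 1) :
    ∃ d, 0 ≤ d ∧ HasDerivAt (dkwψ1 u) d t := by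
  have ha := dkwα_pos ht1
  have hb := dkw_aux hu1 hu0 ht0 ht1
  have hd := dkwα_deriv t
  have hd2 : HasDerivAt (fun t : ℝ => -2 + (8/3)*t - t^2) (8/3 - 2*t) t := by
    have h := (((hasDerivAt_const t (-2:ℝ)).add ((hasDerivAt_id t).const_mul (8/3))).sub
      ((hasDerivAt_id t).pow 2))
    refine (h.congr_deriv ?_)
    simp
  have hb2 := (hasDerivAt_const t (1:ℝ)).sub (hd.mul_const u)
  have h := ((((hb2.log hb.ne').sub (hasDerivAt_const t (Real.log (1-u)))).sub
    (hd.log ha.ne')).add ((hd2.mul ((((hasDerivAt_const t (1:ℝ)).sub hd).const_mul u).sub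
      (hasDerivAt_id t))).div (hd.mul hb2) (mul_pos ha hb).ne')).sub
      ((hasDerivAt_id t).const_mul 4)
  refine ⟨_, ?_, h⟩
  have hP := mul_nonneg ht0 (dkw_poly t u ht0 ht1.le hu0 hu1.le)
  have hM := mul_pos ha hb
  refine le_of_le_of_eq (div_nonneg hP (sq_nonneg (dkwα t * (1 - dkwα t * u)))) ?_
  have ha' := ha.ne'
  have hb' := hb.ne'
  simp only [Pi.sub_apply, Pi.mul_apply, id]
  generalize hB : 1 - dkwα t * u = B at *
  generalize hA : dkwα t = a at *
  field_simp
  subst hB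
  subst hA
  simp only [dkwα]
  ring

theorem dkwψ_nonneg {u t : ℝ} (hu1 : u < 1) (ht0 : 0 ≤ t) (htu : t ≤ u) : 0 ≤ dkwψ u t := by
  have hu0 : 0 ≤ u := ht0.trans htu
  have hα0 : dkwα 0 = 1 := by simp [dkwα]
  have m1 : MonotoneOn (dkwψ1 u) (Set.Icc 0 u) := by
    choose! d hd0 hd using fun (s : ℝ) (hs : s ∈ Set.Icc 0 u) =>
      dkwψ1_deriv hu1 hu0 hs.1 (hs.2.trans_lt hu1)
    refine monotoneOn_of_hasDerivWithinAt_nonneg (convex_Icc 0 u)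
      (fun s hs => (hd s hs).continuousAt.continuousWithinAt) (f' := d)
      (fun s hs => (hd s (interior_subset hs)).hasDerivWithinAt)
      (fun s hs => hd0 s (interior_subset hs))
  have p1 : ∀ s ∈ Set.Icc 0 u, 0 ≤ dkwψ1 u s := by
    intro s hs
    have := m1 ⟨le_rfl, hu0⟩ hs hs.1
    have h0 : dkwψ1 u 0 = 0 := by simp [dkwψ1, hα0]
    rwa [h0] at this
  have m0 : MonotoneOn (dkwψ u) (Set.Icc 0 u) := by
    have hd := fun (s : ℝ) (hs : s ∈ Set.Icc 0 u) =>
      dkwψ_deriv hu1 hu0 hs.1 (hs.2.trans_lt hu1)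
    refine monotoneOn_of_hasDerivWithinAt_nonneg (convex_Icc 0 u)
      (fun s hs => (hd s hs).continuousAt.continuousWithinAt) (f' := dkwψ1 u)
      (fun s hs => (hd s (interior_subset hs)).hasDerivWithinAt)
      (fun s hs => p1 s (interior_subset hs))
  have := m0 ⟨le_rfl, hu0⟩ ⟨ht0, htu⟩ ht0
  have h0 : dkwψ u 0 = 0 := by simp [dkwψ, hα0]
  rwa [h0] at this

noncomputable def dkwB (t u : ℝ) : ℝ := (1 - dkwα t * u) / (1 - u)

noncomputable def dkwTilt (ρ : Measure ℕ) (t : ℝ) (k : ℕ) : Measure ℕ :=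
  ρ.withDensity (fun j => if j ≤ k then ENNReal.ofReal (dkwα t)
    else ENNReal.ofReal (dkwB t (ρ.real (Set.Iic k))))

theorem dkwTilt_le (ρ : Measure ℕ) (t : ℝ) (k : ℕ) {s : Set ℕ} (hs : s ⊆ Set.Iic k) :
    dkwTilt ρ t k s = ENNReal.ofReal (dkwα t) * ρ s := by
  rw [dkwTilt, withDensity_apply _ (MeasurableSet.of_discrete),
    setLIntegral_congr_fun (g := fun _ => ENNReal.ofReal (dkwα t)) MeasurableSet.of_discrete,
    setLIntegral_const]
  intro j hj
  have : j ≤ k := hs hj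
  simp [this]

theorem dkwTilt_gt (ρ : Measure ℕ) (t : ℝ) (k : ℕ) {s : Set ℕ} (hs : s ⊆ Set.Ioi k) :
    dkwTilt ρ t k s = ENNReal.ofReal (dkwB t (ρ.real (Set.Iic k))) * ρ s := by
  rw [dkwTilt, withDensity_apply _ (MeasurableSet.of_discrete),
    setLIntegral_congr_fun (g := fun _ => ENNReal.ofReal (dkwB t (ρ.real (Set.Iic k))))
      MeasurableSet.of_discrete, setLIntegral_const]
  intro j hj
  have : ¬ j ≤ k := not_le.mpr (hs hj)
  simp [this]

theorem dkwTilt_prob (ρ : Measure ℕ) [IsProbabilityMeasure ρ] (t : ℝ) (ht0 : 0 ≤ t) (ht1 : t < 1)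
    (k : ℕ) (hk : ρ.real (Set.Iic k) < 1) : IsProbabilityMeasure (dkwTilt ρ t k) := by
  constructor
  have hc : (Set.univ : Set ℕ) = Set.Iic k ∪ (Set.Iic k)ᶜ := by simp
  have hu0 : 0 ≤ ρ.real (Set.Iic k) := measureReal_nonneg
  have hα := dkwα_pos ht1
  have hb := dkw_aux hk hu0 ht0 ht1
  have h1 : 0 < 1 - ρ.real (Set.Iic k) := by linarith
  have hB : 0 ≤ dkwB t (ρ.real (Set.Iic k)) := div_nonneg hb.le h1.le
  rw [hc, measure_union disjoint_compl_right MeasurableSet.of_discrete,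
    dkwTilt_le _ _ _ subset_rfl, dkwTilt_gt _ _ _ (by simp),
    ← ofReal_measureReal (s := Set.Iic k), ← ofReal_measureReal (s := (Set.Iic k)ᶜ),
    probReal_compl_eq_one_sub MeasurableSet.of_discrete, ← ENNReal.ofReal_mul hα.le,
    ← ENNReal.ofReal_mul hB, ← ENNReal.ofReal_add (by positivity) (by positivity)]
  rw [dkwB, div_mul_cancel₀ _ h1.ne']
  simp

theorem map_min_eq (μ ν : Measure ℕ) [IsProbabilityMeasure μ] [IsProbabilityMeasure ν] (k : ℕ)
    (h : ∀ s ⊆ Set.Iic k, μ s = ν s) :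
    μ.map (fun x => min x (k+1)) = ν.map (fun x => min x (k+1)) := by
  ext s -
  rw [Measure.map_apply (measurable_of_countable _) MeasurableSet.of_discrete,
    Measure.map_apply (measurable_of_countable _) MeasurableSet.of_discrete]
  by_cases hs : k + 1 ∈ s
  · have e : (fun x => min x (k+1)) ⁻¹' s = ((fun x => min x (k+1)) ⁻¹' sᶜ)ᶜ := by simp
    rw [e, prob_compl_eq_one_sub MeasurableSet.of_discrete,
      prob_compl_eq_one_sub MeasurableSet.of_discrete, h]
    intro x hx
    simp only [Set.mem_preimage, Set.mem_compl_iff, Set.mem_Iic] at *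
    by_contra hxk
    exact hx (by rwa [min_eq_right (by omega)])
  · rw [h]
    intro x hx
    simp only [Set.mem_preimage, Set.mem_Iic] at *
    by_contra hxk
    rw [min_eq_right (by omega)] at hx
    exact hs hx

theorem dkw_weight {n N : ℕ} (hN : N ≤ n) {t u : ℝ} (ht0 : 0 ≤ t) (htu : t ≤ u) (hu1 : u < 1)
    (h : (N : ℝ) ≤ n * (u - t)) :
    Real.exp (2*n*t^2) ≤ dkwα t ^ N * dkwB t u ^ (n - N) := by
  have ht1 : t < 1 := by linarith
  have hα := dkwα_pos ht1
  have hα1 := dkwα_le ht0 ht1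
  have hb := dkw_aux hu1 (ht0.trans htu) ht0 ht1
  have h1 : 0 < 1 - u := by linarith
  have hB : 0 < dkwB t u := div_pos hb h1
  have hB1 : dkwα t ≤ dkwB t u := by
    rw [dkwB, le_div_iff₀ h1]; nlinarith
  have hl : Real.log (dkwα t) ≤ Real.log (dkwB t u) := Real.log_le_log hα hB1
  rw [← Real.le_log_iff_exp_le (by positivity), Real.log_mul (by positivity) (by positivity),
    Real.log_pow, Real.log_pow, Nat.cast_sub hN]
  have hψ := dkwψ_nonneg hu1 ht0 htu
  have e : Real.log (dkwB t u) = Real.log (1 - dkwα t * u) - Real.log (1-u) :=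
    Real.log_div hb.ne' h1.ne'
  rw [dkwψ, ← e] at hψ
  have hn : (0:ℝ) ≤ n := Nat.cast_nonneg n
  have := mul_nonneg hn hψ
  have := mul_le_mul_of_nonneg_right h (sub_nonneg.2 hl)
  nlinarith

def dkwN {n : ℕ} (ω : Fin n → ℕ) (k : ℕ) : ℕ := (Finset.univ.filter (fun i => ω i ≤ k)).card

theorem dkw_nat (n : ℕ) (ρ : Measure ℕ) [IsProbabilityMeasure ρ] (t : ℝ) (ht : 0 < t) (K : ℕ)
    (hK : ρ.real (Set.Iic K) < 1) :
    Measure.pi (fun _ : Fin n => ρ) {ω | ∃ k ≤ K, (dkwN ω k : ℝ) ≤ n * (ρ.real (Set.Iic k) - t)}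
      ≤ ENNReal.ofReal (Real.exp (-(2*n*t^2))) := by
  have hmono : ∀ k ≤ K, ρ.real (Set.Iic k) < 1 := fun k hk =>
    (measureReal_mono (Set.Iic_subset_Iic.2 hk)).trans_lt hK
  rcases Nat.eq_zero_or_pos n with rfl | hn
  · simp only [CharP.cast_eq_zero, mul_zero, zero_mul, neg_zero, Real.exp_zero, ENNReal.ofReal_one]
    exact prob_le_one
  have hn' : (0:ℝ) < n := Nat.cast_pos.2 hn
  have hE : ∀ k, ∀ ω : Fin n → ℕ, (dkwN ω k : ℝ) ≤ n * (ρ.real (Set.Iic k) - t) →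
      t ≤ ρ.real (Set.Iic k) := by
    intro k ω h
    have h0 : (0:ℝ) ≤ n * (ρ.real (Set.Iic k) - t) := (Nat.cast_nonneg _).trans h
    have := nonneg_of_mul_nonneg_right h0 hn'
    linarith
  by_cases ht1 : t < 1
  swap
  · have : {ω : Fin n → ℕ | ∃ k ≤ K, (dkwN ω k : ℝ) ≤ n * (ρ.real (Set.Iic k) - t)} = ∅ := by
      ext ω
      simp only [Set.mem_ofPred_eq, Set.mem_empty_iff_false, iff_false]
      rintro ⟨k, hk, h⟩
      have := hE k ω h
      have := hmono k hk
      linarith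
    rw [this]; simp
  have := fun k (hk : k ≤ K) => dkwTilt_prob ρ t ht.le ht1 k (hmono k hk)
  have := this K le_rfl
  set E : ℕ → Set (Fin n → ℕ) :=
    fun k => {ω | (dkwN ω k : ℝ) ≤ n * (ρ.real (Set.Iic k) - t)} with hEdef
  set A : ℕ → Set (Fin n → ℕ) := fun k => {ω | ω ∈ E k ∧ ∀ j < k, ω ∉ E j} with hAdef
  set c := ENNReal.ofReal (Real.exp (2*n*t^2)) with hc
  -- key estimate
  have key : ∀ k ≤ K, c * Measure.pi (fun _ : Fin n => ρ) (A k)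
      ≤ Measure.pi (fun _ : Fin n => dkwTilt ρ t K) (A k) := by
    intro k hk
    have := dkwTilt_prob ρ t ht.le ht1 k (hmono k hk)
    have hpre : (fun (ω : Fin n → ℕ) i => min (ω i) (k+1)) ⁻¹' (A k) = A k := by
      have hEj : ∀ j ≤ k, ∀ ω : Fin n → ℕ, (fun i => min (ω i) (k+1)) ∈ E j ↔ ω ∈ E j := by
        intro j hj ω
        have : dkwN (fun i => min (ω i) (k+1)) j = dkwN ω j := by
          unfold dkwN
          congr 1
          ext i
          simp
          omega
        simp only [hEdef, Set.mem_ofPred_eq, this]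
      ext ω
      simp only [hAdef, Set.mem_preimage, Set.mem_ofPred_eq]
      rw [hEj k le_rfl]
      refine and_congr_right fun _ => forall_congr' fun j => ?_
      refine imp_congr_right fun hj => ?_
      rw [hEj j hj.le]
    have hmap : ∀ μ : Measure ℕ, IsProbabilityMeasure μ →
        Measure.pi (fun _ : Fin n => μ) (A k) =
        Measure.pi (fun _ : Fin n => μ.map (fun x => min x (k+1))) (A k) := by
      intro μ hμ
      have := fun _ : Fin n =>
        Measure.isProbabilityMeasure_map (μ := μ) (f := fun x => min x (k+1))
          (measurable_of_countable _).aemeasurable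
      rw [← Measure.pi_map_pi (fun _ => (measurable_of_countable _).aemeasurable),
        Measure.map_apply (measurable_of_countable _) MeasurableSet.of_discrete, hpre]
    have heq : Measure.pi (fun _ : Fin n => dkwTilt ρ t K) (A k)
        = Measure.pi (fun _ : Fin n => dkwTilt ρ t k) (A k) := by
      rw [hmap _ inferInstance, hmap (dkwTilt ρ t k) inferInstance, map_min_eq _ (dkwTilt ρ t k)]
      intro s hs
      rw [dkwTilt_le _ _ _ hs, dkwTilt_le _ _ _ (hs.trans (Set.Iic_subset_Iic.2 hk))]
    rw [heq, ← Measure.tsum_indicator_apply_singleton _ _ MeasurableSet.of_discrete,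
      ← Measure.tsum_indicator_apply_singleton _ (A k) MeasurableSet.of_discrete,
      ← ENNReal.tsum_mul_left]
    refine ENNReal.tsum_le_tsum fun ω => ?_
    by_cases hω : ω ∈ A k
    swap
    · simp [hω]
    simp only [Set.indicator_of_mem hω, Measure.pi_singleton]
    have hω' : (dkwN ω k : ℝ) ≤ n * (ρ.real (Set.Iic k) - t) := hω.1
    have hNn : dkwN ω k ≤ n := (Finset.card_le_univ _).trans (by simp)
    have hw := dkw_weight hNn ht.le (hE k ω hω') (hmono k hk) hω'
    have hs : ∀ i, dkwTilt ρ t k {ω i} = (if ω i ≤ k then ENNReal.ofReal (dkwα t)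
        else ENNReal.ofReal (dkwB t (ρ.real (Set.Iic k)))) * ρ {ω i} := by
      intro i
      split_ifs with h
      · exact dkwTilt_le _ _ _ (by simpa using h)
      · exact dkwTilt_gt _ _ _ (by simpa using h)
    simp_rw [hs]
    rw [Finset.prod_mul_distrib]
    gcongr
    rw [Finset.prod_ite, Finset.prod_const, Finset.prod_const]
    have hcard : (Finset.univ.filter (fun i => ¬ ω i ≤ k)).card = n - dkwN ω k := by
      have := Finset.card_filter_add_card_filter_not (s := Finset.univ) (fun i : Fin n => ω i ≤ k)
      simp only [Finset.card_univ, Fintype.card_fin] at this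
      unfold dkwN
      omega
    rw [hcard]
    have hα := dkwα_pos ht1
    have hB : 0 ≤ dkwB t (ρ.real (Set.Iic k)) :=
      div_nonneg (dkw_aux (hmono k hk) measureReal_nonneg ht.le ht1).le
        (by linarith [hmono k hk])
    rw [← ENNReal.ofReal_pow hα.le, ← ENNReal.ofReal_pow hB, ← ENNReal.ofReal_mul (by positivity)]
    exact ENNReal.ofReal_le_ofReal hw
  have hsub : {ω : Fin n → ℕ | ∃ k ≤ K, (dkwN ω k : ℝ) ≤ n * (ρ.real (Set.Iic k) - t)}
      ⊆ ⋃ k ∈ Finset.range (K+1), A k := by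
    rintro ω ⟨k, hk, h⟩
    classical
    have hex : ∃ k, ω ∈ E k := ⟨k, h⟩
    simp only [Set.mem_iUnion, Finset.mem_range]
    refine ⟨Nat.find hex, ?_, Nat.find_spec hex, fun j hj => Nat.find_min hex hj⟩
    have : Nat.find hex ≤ k := Nat.find_min' hex h
    omega
  have hdisj : (↑(Finset.range (K+1)) : Set ℕ).PairwiseDisjoint A := by
    intro i _ j _ hij
    refine Set.disjoint_left.2 fun ω hi hj => ?_
    rcases lt_or_gt_of_ne hij with h | h
    · exact hj.2 i h hi.1
    · exact hi.2 j h hj.1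
  have hfin : c * Measure.pi (fun _ : Fin n => ρ)
      {ω | ∃ k ≤ K, (dkwN ω k : ℝ) ≤ n * (ρ.real (Set.Iic k) - t)} ≤ 1 := by
    calc _ ≤ c * ∑ k ∈ Finset.range (K+1), Measure.pi (fun _ : Fin n => ρ) (A k) := by
          gcongr
          exact (measure_mono hsub).trans (measure_biUnion_finset_le _ _)
      _ = ∑ k ∈ Finset.range (K+1), c * Measure.pi (fun _ : Fin n => ρ) (A k) := by
          rw [Finset.mul_sum]
      _ ≤ ∑ k ∈ Finset.range (K+1), Measure.pi (fun _ : Fin n => dkwTilt ρ t K) (A k) :=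
          Finset.sum_le_sum fun k hk => key k (by simpa [Nat.lt_succ_iff] using hk)
      _ = Measure.pi (fun _ : Fin n => dkwTilt ρ t K) (⋃ k ∈ Finset.range (K+1), A k) :=
          (measure_biUnion_finset hdisj fun _ _ => MeasurableSet.of_discrete).symm
      _ ≤ 1 := prob_le_one
  rw [Real.exp_neg, ENNReal.ofReal_inv_of_pos (Real.exp_pos _), ← hc, ENNReal.le_inv_iff_mul_le,
    mul_comm]
  exact hfin

theorem dkw_finset {E : Type*} [MeasurableSpace E] (ν : Measure E) [IsProbabilityMeasure ν]
    (X : E → ℝ) (hX : Measurable X) (n : ℕ) (t : ℝ) (ht : 0 < t) (F : Finset ℚ)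
    (hF : ∀ s ∈ F, ν.real {x | (s:ℝ) < X x} < 1) :
    Measure.pi (fun _ : Fin n => ν) {ω | ∃ s ∈ F,
      ((Finset.univ.filter (fun i => (s:ℝ) < X (ω i))).card : ℝ)
        ≤ n * (ν.real {x | (s:ℝ) < X x} - t)}
      ≤ ENNReal.ofReal (Real.exp (-(2*n*t^2))) := by
  rcases F.eq_empty_or_nonempty with rfl | hne
  · simp
  set lab : E → ℕ := fun x => (F.filter (fun s : ℚ => X x ≤ (s:ℝ))).card with hlab
  set kk : ℚ → ℕ := fun s => (F.filter (fun r : ℚ => s < r)).card with hkk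
  have hlabm : Measurable lab := by
    have : lab = fun x => ∑ s ∈ F, if X x ≤ (s:ℝ) then 1 else 0 := by
      ext x; simp only [hlab, Finset.card_filter]
    rw [this]
    refine Finset.measurable_sum _ fun s _ => ?_
    exact Measurable.ite (measurableSet_le hX measurable_const) measurable_const measurable_const
  have hiff : ∀ s ∈ F, ∀ x, lab x ≤ kk s ↔ (s:ℝ) < X x := by
    intro s hs x
    constructor
    · intro h
      by_contra hx
      rw [not_lt] at hx
      have : kk s < lab x := by
        refine Finset.card_lt_card ((Finset.ssubset_iff_of_subset ?_).2 ⟨s, ?_, ?_⟩)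
        · intro r hr
          simp only [Finset.mem_filter] at hr ⊢
          exact ⟨hr.1, hx.trans (by exact_mod_cast hr.2.le)⟩
        · simp [hs, hx]
        · simp
      omega
    · intro h
      refine Finset.card_le_card fun r hr => ?_
      simp only [Finset.mem_filter] at hr ⊢
      refine ⟨hr.1, ?_⟩
      have := h.trans_le hr.2
      exact_mod_cast this
  have hprob : IsProbabilityMeasure (ν.map lab) :=
    Measure.isProbabilityMeasure_map hlabm.aemeasurable
  have hρ : ∀ s ∈ F, (ν.map lab).real (Set.Iic (kk s)) = ν.real {x | (s:ℝ) < X x} := by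
    intro s hs
    rw [map_measureReal_apply hlabm MeasurableSet.of_discrete]
    congr 1
    ext x
    exact hiff s hs x
  obtain ⟨s0, hs0, hmin⟩ := F.exists_min_image id hne
  have hkmax : ∀ s ∈ F, kk s ≤ kk s0 := by
    intro s hs
    refine Finset.card_le_card fun r hr => ?_
    simp only [Finset.mem_filter] at hr ⊢
    exact ⟨hr.1, (hmin s hs).trans_lt hr.2⟩
  have main := dkw_nat n (ν.map lab) t ht (kk s0) (by rw [hρ s0 hs0]; exact hF s0 hs0)
  have hm : Measurable (fun (ω : Fin n → E) i => lab (ω i)) :=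
    measurable_pi_lambda _ fun i => hlabm.comp (measurable_pi_apply i)
  rw [← Measure.pi_map_pi (fun _ => hlabm.aemeasurable),
    Measure.map_apply hm MeasurableSet.of_discrete] at main
  refine (measure_mono ?_).trans main
  rintro ω ⟨s, hs, h⟩
  refine ⟨kk s, hkmax s hs, ?_⟩
  rw [hρ s hs]
  have : dkwN (fun i => lab (ω i)) (kk s)
      = (Finset.univ.filter (fun i => (s:ℝ) < X (ω i))).card := by
    unfold dkwN
    congr 1
    ext i
    simp [hiff s hs]
  rw [this]
  exact h

theorem dkw_real {E : Type*} [MeasurableSpace E] (ν : Measure E) [IsProbabilityMeasure ν]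
    (X : E → ℝ) (hX : Measurable X) (n : ℕ) (hn : 0 < n) (t : ℝ) (ht : 0 < t) :
    Measure.pi (fun _ : Fin n => ν) {ω | ∃ x : ℝ, ν.real {p | X p ≤ x} <
      1 - (1 / n) * (∑ i : Fin n, if x < X (ω i) then (1:ℝ) else 0) - t}
      ≤ ENNReal.ofReal (Real.exp (-(2*n*t^2))) := by
  have hn' : (0:ℝ) < n := Nat.cast_pos.2 hn
  set G : ℚ → Set (Fin n → E) := fun s => {ω |
      ((Finset.univ.filter (fun i => (s:ℝ) < X (ω i))).card : ℝ)
        ≤ n * (ν.real {x | (s:ℝ) < X x} - t)} with hG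
  set T := {s : ℚ // ν.real {x | (s:ℝ) < X x} < 1}
  have hcompl : ∀ x : ℝ, ν.real {p | x < X p} = 1 - ν.real {p | X p ≤ x} := by
    intro x
    rw [← probReal_compl_eq_one_sub (measurableSet_le hX measurable_const)]
    congr 1
    ext p
    simp
  have hsub : {ω : Fin n → E | ∃ x : ℝ, ν.real {p | X p ≤ x} <
      1 - (1 / n) * (∑ i : Fin n, if x < X (ω i) then (1:ℝ) else 0) - t} ⊆ ⋃ s, G s := by
    rintro ω ⟨x, hx⟩
    have hprob : IsProbabilityMeasure (ν.map X) :=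
      Measure.isProbabilityMeasure_map hX.aemeasurable
    have hcdf : ∀ y, cdf (ν.map X) y = ν.real {p | X p ≤ y} := by
      intro y
      rw [cdf_eq_real, map_measureReal_apply hX measurableSet_Iic]
      rfl
    rw [← hcdf] at hx
    have hev : ∀ᶠ y in nhdsWithin x (Set.Ioi x), cdf (ν.map X) y <
        1 - (1 / n) * (∑ i : Fin n, if x < X (ω i) then (1:ℝ) else 0) - t :=
      (((cdf (ν.map X)).right_continuous x).mono Set.Ioi_subset_Ici_self).eventually_lt_const hx
    obtain ⟨r, hr, hsubr⟩ := mem_nhdsGT_iff_exists_Ioo_subset.1 hev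
    obtain ⟨q, hq1, hq2⟩ := exists_rat_btwn (show x < r from hr)
    have hq : cdf (ν.map X) (q:ℝ) < _ := hsubr ⟨hq1, hq2⟩
    rw [hcdf] at hq
    refine Set.mem_iUnion.2 ⟨q, ?_⟩
    simp only [hG, Set.mem_ofPred_eq]
    rw [hcompl]
    have h1 : ((Finset.univ.filter (fun i => (q:ℝ) < X (ω i))).card : ℝ)
        ≤ ∑ i : Fin n, if x < X (ω i) then (1:ℝ) else 0 := by
      rw [Finset.sum_boole]
      exact_mod_cast Finset.card_le_card fun i hi => by
        simp only [Finset.mem_filter, Finset.mem_univ, true_and] at hi ⊢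
        exact hq1.trans hi
    refine h1.trans ?_
    generalize (∑ i : Fin n, if x < X (ω i) then (1:ℝ) else 0) = N at *
    have h2 : 1 / n * N < 1 - ν.real {p | X p ≤ (q:ℝ)} - t := by linarith
    have h3 := mul_lt_mul_of_pos_left h2 hn'
    have h4 : (n:ℝ) * (1 / n * N) = N := by field_simp
    linarith
  have hnull : Measure.pi (fun _ : Fin n => ν)
      (⋃ s ∈ {s : ℚ | ¬ ν.real {x | (s:ℝ) < X x} < 1}, G s) = 0 := by
    refine (measure_biUnion_null_iff (Set.to_countable _)).2 fun s hs => ?_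
    have h1 : ν.real {x | (s:ℝ) < X x} = 1 := le_antisymm measureReal_le_one (not_lt.1 hs)
    have h0 : ν {p | X p ≤ (s:ℝ)} = 0 := by
      rw [hcompl] at h1
      have : ν.real {p | X p ≤ (s:ℝ)} = 0 := by linarith
      exact (measureReal_eq_zero_iff).1 this
    refine measure_mono_null (t := ⋃ i : Fin n, Function.eval i ⁻¹' {p | X p ≤ (s:ℝ)}) ?_ ?_
    · intro ω hω
      by_contra hcon
      simp only [Set.mem_iUnion, not_exists, Set.mem_preimage, Function.eval, Set.mem_ofPred_eq,
        not_le] at hcon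
      have : (Finset.univ.filter (fun i => (s:ℝ) < X (ω i))) = Finset.univ := by
        ext i; simp [hcon i]
      simp only [hG, Set.mem_ofPred_eq] at hω
      rw [this, h1] at hω
      simp at hω
      nlinarith
    · exact measure_iUnion_null fun i => Measure.pi_eval_preimage_null _ h0
  set U : Finset T → Set (Fin n → E) := fun F => ⋃ s ∈ F, G s.1 with hU
  have hsub2 : (⋃ s, G s) ⊆ (⋃ F, U F) ∪
      (⋃ s ∈ {s : ℚ | ¬ ν.real {x | (s:ℝ) < X x} < 1}, G s) := by
    intro ω hω
    obtain ⟨s, hs⟩ := Set.mem_iUnion.1 hω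
    by_cases h : ν.real {x | (s:ℝ) < X x} < 1
    · left
      refine Set.mem_iUnion.2 ⟨{⟨s, h⟩}, ?_⟩
      simpa [hU] using hs
    · right
      exact Set.mem_biUnion (x := s) h hs
  refine (measure_mono (hsub.trans hsub2)).trans ((measure_union_le _ _).trans ?_)
  rw [hnull, add_zero]
  have hdir : Directed (· ⊆ ·) U := by
    classical
    refine Monotone.directed_le (f := U) fun F F' h => ?_
    exact Set.biUnion_subset_biUnion_left h
  rw [hdir.measure_iUnion]
  refine iSup_le fun F => ?_
  classical
  refine le_trans (measure_mono ?_) (dkw_finset ν X hX n t ht (F.image Subtype.val) ?_)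
  · intro ω hω
    simp only [hU, Set.mem_iUnion] at hω
    obtain ⟨s, hs, h⟩ := hω
    exact ⟨s.1, Finset.mem_image_of_mem _ hs, h⟩
  · intro s hs
    obtain ⟨r, _, rfl⟩ := Finset.mem_image.1 hs
    exact r.2

/-- **Refined Lee-et-al. bound via Dvoretzky–Kiefer–Wolfowitz.**
Drawing `n` pairs `(Sᵢ,hᵢ)` i.i.d. from `D^m ⊗ Q`, with probability at least
`1−δ` over these pairs, for every `ε > 0`,
`P_{S∼D^m, h∼Q_S}[ |R_D^ℓ(h) − R_S^ℓ(h)| ≤ μ(h,S) + ε ]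
  ≥ 1 − (1/n)·Σᵢ 1[|R_D^ℓ(hᵢ) − R_{Sᵢ}^ℓ(hᵢ)| − μ(hᵢ,Sᵢ) > ε]
      − √(ln(2/δ)/(2n))`. -/
theorem lee_refined_dkw_bound
    {Z H : Type*} [MeasurableSpace Z] [MeasurableSpace H]
    (m : ℕ) (hm : 0 < m) (n : ℕ) (hn : 0 < n)
    (D : Measure Z) [IsProbabilityMeasure D]
    (ℓ : H → Z → ℝ) (hℓ : Measurable (Function.uncurry ℓ))
    (hℓ01 : ∀ h z, ℓ h z ∈ Set.Icc (0:ℝ) 1)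
    (μ : H → (Fin m → Z) → ℝ) (hμ : Measurable (Function.uncurry μ))
    (κ : Kernel (Fin m → Z) H) [IsMarkovKernel κ]
    (δ : ℝ) (hδ : δ ∈ Set.Ioc (0:ℝ) 1) :
    1 - ENNReal.ofReal δ ≤
      (Measure.pi (fun _ : Fin n =>
          Measure.pi (fun _ : Fin m => D) ⊗ₘ κ))
        {ω : Fin n → ((Fin m → Z) × H) | ∀ ε : ℝ, 0 < ε →
          1 - (1 / n) * (∑ i : Fin n,
                if ε < |trueRisk D ℓ (ω i).2 - empRisk ℓ (ω i).2 (ω i).1|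
                      - μ (ω i).2 (ω i).1 then (1:ℝ) else 0)
            - Real.sqrt (Real.log (2/δ) / (2*n)) ≤
          ((Measure.pi (fun _ : Fin m => D) ⊗ₘ κ)
            {p : (Fin m → Z) × H |
              |trueRisk D ℓ p.2 - empRisk ℓ p.2 p.1| ≤ μ p.2 p.1 + ε}).toReal } := by
  set P := Measure.pi (fun _ : Fin m => D) ⊗ₘ κ with hP
  set X : (Fin m → Z) × H → ℝ := fun p =>
    |trueRisk D ℓ p.2 - empRisk ℓ p.2 p.1| - μ p.2 p.1 with hXdef
  have hT : Measurable (trueRisk D ℓ) := by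
    have : StronglyMeasurable (fun h => ∫ z, Function.uncurry ℓ (h, z) ∂D) :=
      hℓ.stronglyMeasurable.integral_prod_right'
    exact this.measurable
  have hEm : Measurable (fun p : (Fin m → Z) × H => empRisk ℓ p.2 p.1) := by
    unfold empRisk
    refine Measurable.div_const (Finset.measurable_sum _ fun i _ => ?_) _
    exact hℓ.comp (measurable_snd.prodMk ((measurable_pi_apply i).comp measurable_fst))
  have hμm : Measurable (fun p : (Fin m → Z) × H => μ p.2 p.1) :=
    hμ.comp (measurable_snd.prodMk measurable_fst)
  have hX : Measurable X :=
    (continuous_abs.measurable.comp ((hT.comp measurable_snd).sub hEm)).sub hμm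
  have hn' : (0:ℝ) < n := Nat.cast_pos.2 hn
  have hlog : 0 < Real.log (2/δ) := Real.log_pos (by
    rw [lt_div_iff₀ hδ.1]; linarith [hδ.2])
  set t := Real.sqrt (Real.log (2/δ) / (2*n)) with ht
  have htpos : 0 < t := Real.sqrt_pos.2 (by positivity)
  have hsq : 2 * n * t^2 = Real.log (2/δ) := by
    rw [ht, Real.sq_sqrt (by positivity)]; field_simp
  have main := dkw_real P X hX n hn t htpos
  rw [hsq, Real.exp_neg, Real.exp_log (div_pos two_pos hδ.1)] at main
  have hle : ENNReal.ofReal ((2/δ)⁻¹) ≤ ENNReal.ofReal δ := by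
    refine ENNReal.ofReal_le_ofReal ?_
    rw [inv_div]; linarith [hδ.1]
  rw [tsub_le_iff_right]
  have huniv : (1 : ENNReal) = Measure.pi (fun _ : Fin n => P) Set.univ := by simp
  rw [huniv]
  refine le_trans (le_trans (measure_mono ?_) (measure_union_le _ _))
    (add_le_add_right (main.trans hle) _)
  intro ω _
  by_cases hω : ∃ x : ℝ, P.real {p | X p ≤ x} <
      1 - (1 / n) * (∑ i : Fin n, if x < X (ω i) then (1:ℝ) else 0) - t
  · right; exact hω
  · left
    intro ε _
    have h := not_lt.1 (not_exists.1 hω ε)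
    have e : {p : (Fin m → Z) × H | |trueRisk D ℓ p.2 - empRisk ℓ p.2 p.1| ≤ μ p.2 p.1 + ε}
        = {p | X p ≤ ε} := by
      ext p
      simp only [hXdef, Set.mem_ofPred_eq]
      constructor <;> intro h <;> linarith
    rw [e]
    exact h
end

section
/- Disintegrated Catoni bound: For any probability measure D on Z, any loss ℓ : H × Z → [0,1], any prior density P on H, any posterior Markov kernel S ↦ Q_S with strictly positive densities, any fixed c > 0, and any δ ∈ (0,1], with probability at least 1−δ over S ∼ D^m and h ∼ Q_S one has R_D^ℓ(h) ≤ (1/(1−e^{−c}))·{ 1 − exp( −c·R_S^ℓ(h) − (1/m)·[ ln(Q_S(h)/P(h)) + ln(1/δ) ] ) }. -/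
open MeasureTheory ProbabilityTheory

lemma catoni_exp_le (c x : ℝ) (hx : x ∈ Set.Icc (0:ℝ) 1) :
    Real.exp (-c * x) ≤ 1 - (1 - Real.exp (-c)) * x := by
  have h := convexOn_exp.2 (Set.mem_univ (0:ℝ)) (Set.mem_univ (-c))
    (sub_nonneg.2 hx.2) hx.1 (by ring)
  simp only [smul_eq_mul, mul_zero, zero_add, Real.exp_zero, mul_one] at h
  rw [mul_comm] 
  linarith

lemma catoni_bad (m : ℕ) (hm : 0 < m) (c R k e q p δ : ℝ) (hk : 0 < k) (ha : 0 < 1 - k * R)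
    (hq : 0 < q) (hp : 0 < p) (hδ : 0 < δ)
    (h : ¬ R ≤ (1 / k) * (1 - Real.exp (-c * (e / m) - (1/m) *
      (Real.log (q / p) + Real.log (1/δ))))) :
    q ≤ p * (δ * (((1 - k * R) ^ m)⁻¹ * Real.exp (-c * e))) := by
  have hm' : (0:ℝ) < m := by exact_mod_cast hm
  rw [not_le, one_div, inv_mul_eq_div, div_lt_iff₀ hk] at h
  have h2 : 1 - k * R < Real.exp (-c * (e / m) - (1/m) *
      (Real.log (q / p) + Real.log (1/δ))) := by linarith
  have h3 := (Real.log_lt_iff_lt_exp ha).2 h2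
  have h4 : m * Real.log (1 - k * R) < -c * e - (Real.log (q / p) + Real.log (1/δ)) := by
    calc (m:ℝ) * Real.log (1 - k * R) < (m:ℝ) * (-c * (e / m) - (1/m) *
      (Real.log (q / p) + Real.log (1/δ))) := mul_lt_mul_of_pos_left h3 hm'
      _ = _ := by field_simp
  rw [Real.log_div hq.ne' hp.ne', one_div, Real.log_inv] at h4
  have hpos : 0 < p * (δ * (((1 - k * R) ^ m)⁻¹ * Real.exp (-c * e))) := by positivity
  rw [← Real.log_le_log_iff hq hpos, Real.log_mul hp.ne' (by positivity),
    Real.log_mul hδ.ne' (by positivity), Real.log_mul (by positivity) (by positivity),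
    Real.log_inv, Real.log_pow, Real.log_exp]
  linarith

/-- **Disintegrated Catoni bound.**  For any fixed `c > 0` and `δ ∈ (0,1]`,
with probability at least `1−δ` over `S ∼ D^m` and `h ∼ Q_S`,
`R_D^ℓ(h) ≤ (1/(1−e^{−c}))·{1 − exp(−c·R_S^ℓ(h) − (1/m)·[ln(Q_S(h)/P(h)) + ln(1/δ)])}`. -/
theorem catoni_disintegrated_bound
    {Z H : Type*} [MeasurableSpace Z] [MeasurableSpace H]
    (m : ℕ) (hm : 0 < m)
    (D : Measure Z) [IsProbabilityMeasure D]
    (lam : Measure H) [SigmaFinite lam]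
    (ℓ : H → Z → ℝ) (hℓ : Measurable (Function.uncurry ℓ))
    (hℓ01 : ∀ h z, ℓ h z ∈ Set.Icc (0:ℝ) 1)
    (P : H → ℝ) (hPpos : ∀ h, 0 < P h) (hPmeas : Measurable P)
    (Pm : Measure H) [IsProbabilityMeasure Pm]
    (hPm : Pm = lam.withDensity fun h => ENNReal.ofReal (P h))
    (Q : (Fin m → Z) → H → ℝ) (hQpos : ∀ S h, 0 < Q S h)
    (κ : Kernel (Fin m → Z) H) [IsMarkovKernel κ]
    (hκ : ∀ S, κ S = lam.withDensity fun h => ENNReal.ofReal (Q S h))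
    (c : ℝ) (hc : 0 < c)
    (δ : ℝ) (hδ : δ ∈ Set.Ioc (0:ℝ) 1) :
    1 - ENNReal.ofReal δ ≤
      (Measure.pi (fun _ : Fin m => D) ⊗ₘ κ)
        {p : (Fin m → Z) × H |
          trueRisk D ℓ p.2 ≤
            (1 / (1 - Real.exp (-c))) *
              (1 - Real.exp (-c * empRisk ℓ p.2 p.1
                - (1/m) * (Real.log (Q p.1 p.2 / P p.2) + Real.log (1/δ)))) } := by
  classical
  set μ := Measure.pi (fun _ : Fin m => D) with hμ
  set A := {p : (Fin m → Z) × H |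
          trueRisk D ℓ p.2 ≤
            (1 / (1 - Real.exp (-c))) *
              (1 - Real.exp (-c * empRisk ℓ p.2 p.1
                - (1/m) * (Real.log (Q p.1 p.2 / P p.2) + Real.log (1/δ)))) } with hA
  have hk : 0 < 1 - Real.exp (-c) := by
    have : Real.exp (-c) < 1 := by rw [← Real.exp_zero]; exact Real.exp_lt_exp.2 (by linarith)
    linarith
  set k := 1 - Real.exp (-c) with hkdef
  have hk1 : k < 1 := by have := Real.exp_pos (-c); linarith
  have hℓh : ∀ h, Measurable (ℓ h) := fun h => hℓ.comp measurable_prodMk_left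
  have hint : ∀ h, Integrable (ℓ h) D := fun h =>
    Integrable.of_mem_Icc 0 1 (hℓh h).aemeasurable (Filter.Eventually.of_forall (hℓ01 h))
  have hR1 : ∀ h, trueRisk D ℓ h ≤ 1 := fun h => by
    have := integral_mono (hint h) (integrable_const (1:ℝ)) (fun z => (hℓ01 h z).2)
    simpa [trueRisk] using this
  have ha : ∀ h, 0 < 1 - k * trueRisk D ℓ h := fun h => by nlinarith [hR1 h]
  have hRm : Measurable (trueRisk D ℓ) :=
    (hℓ.stronglyMeasurable.integral_prod_right (ν := D)).measurable
  -- one-sample bound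
  have hone : ∀ h, ∫⁻ z, ENNReal.ofReal (Real.exp (-c * ℓ h z)) ∂D
      ≤ ENNReal.ofReal (1 - k * trueRisk D ℓ h) := fun h => by
    have hi : Integrable (fun z => 1 - k * ℓ h z) D :=
      (integrable_const (1:ℝ)).sub ((hint h).const_mul k)
    calc _ ≤ ∫⁻ z, ENNReal.ofReal (1 - k * ℓ h z) ∂D :=
          lintegral_mono fun z => ENNReal.ofReal_le_ofReal (catoni_exp_le c _ (hℓ01 h z))
      _ = ENNReal.ofReal (∫ z, (1 - k * ℓ h z) ∂D) := by
          rw [ofReal_integral_eq_lintegral_ofReal hi]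
          refine Filter.Eventually.of_forall fun z => ?_
          have := hℓ01 h z
          simp only [Pi.zero_apply]
          nlinarith [this.1, this.2]
      _ = _ := by
          rw [integral_sub (integrable_const (1:ℝ)) ((hint h).const_mul k), integral_const_mul]
          simp [trueRisk]
  let F : (Fin m → Z) → H → ENNReal := fun S h =>
    ENNReal.ofReal (((1 - k * trueRisk D ℓ h) ^ m)⁻¹ * Real.exp (-c * ∑ i, ℓ h (S i)))
  have hFm : Measurable (Function.uncurry F) := by
    have h1 : ∀ i : Fin m, Measurable fun p : (Fin m → Z) × H => ℓ p.2 (p.1 i) := fun i =>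
      hℓ.comp (measurable_snd.prodMk ((measurable_pi_apply i).comp measurable_fst))
    have h2 : Measurable fun p : (Fin m → Z) × H => trueRisk D ℓ p.2 := hRm.comp measurable_snd
    have h3 : Measurable fun p : (Fin m → Z) × H => ∑ i, ℓ p.2 (p.1 i) :=
      Finset.measurable_sum _ fun i _ => h1 i
    show Measurable fun p : (Fin m → Z) × H => ENNReal.ofReal
      (((1 - k * trueRisk D ℓ p.2) ^ m)⁻¹ * Real.exp (-c * ∑ i, ℓ p.2 (p.1 i)))
    fun_prop
  have hF1 : ∀ h, ∫⁻ S, F S h ∂μ ≤ 1 := fun h => by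
    have hpos := pow_pos (ha h) m
    have e : ∀ S, F S h = ENNReal.ofReal (((1 - k * trueRisk D ℓ h) ^ m)⁻¹) *
        ∏ i, ENNReal.ofReal (Real.exp (-c * ℓ h (S i))) := fun S => by
      simp only [F]
      rw [ENNReal.ofReal_mul (by positivity), Finset.mul_sum, Real.exp_sum,
        ENNReal.ofReal_prod_of_nonneg (fun i _ => (Real.exp_pos _).le)]
    have hem : Measurable fun z => ENNReal.ofReal (Real.exp (-c * ℓ h z)) := by
      have := hℓh h
      fun_prop
    have hprod : ∫⁻ S : Fin m → Z, ∏ i, ENNReal.ofReal (Real.exp (-c * ℓ h (S i)))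
        ∂(Measure.pi fun _ : Fin m => D) =
        ∏ _i : Fin m, ∫⁻ z, ENNReal.ofReal (Real.exp (-c * ℓ h z)) ∂D := by
      have hind := iIndepFun_pi (μ := fun _ : Fin m => D)
        (X := fun _ z => ENNReal.ofReal (Real.exp (-c * ℓ h z))) (fun _ => hem.aemeasurable)
      rw [lintegral_prod_eq_prod_lintegral_of_indepFun Finset.univ _ hind
        (fun i => hem.comp (measurable_pi_apply i))]
      refine Finset.prod_congr rfl fun i _ => ?_
      exact (measurePreserving_eval (fun _ : Fin m => D) i).lintegral_comp hem
    simp_rw [e]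
    rw [lintegral_const_mul' _ _ ENNReal.ofReal_ne_top, hμ,
      hprod]
    calc _ ≤ ENNReal.ofReal (((1 - k * trueRisk D ℓ h) ^ m)⁻¹) *
          ∏ i : Fin m, ENNReal.ofReal (1 - k * trueRisk D ℓ h) := by
          gcongr; exact hone h
      _ = 1 := by
          rw [Finset.prod_const, Finset.card_univ, Fintype.card_fin,
            ← ENNReal.ofReal_pow (ha h).le, ← ENNReal.ofReal_mul (by positivity),
            inv_mul_cancel₀ hpos.ne', ENNReal.ofReal_one]
  rw [← measure_toMeasurable A]
  set B := toMeasurable (μ ⊗ₘ κ) A with hB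
  have hBm : MeasurableSet B := measurableSet_toMeasurable _ _
  have hAB : A ⊆ B := subset_toMeasurable _ _
  have hC : (μ ⊗ₘ κ) Bᶜ ≤ ENNReal.ofReal δ := by
    rw [Measure.compProd_apply hBm.compl]
    calc ∫⁻ S, κ S (Prod.mk S ⁻¹' Bᶜ) ∂μ
        ≤ ∫⁻ S, ∫⁻ h, ENNReal.ofReal δ * F S h ∂Pm ∂μ := by
          refine lintegral_mono fun S => ?_
          have hs : MeasurableSet (Prod.mk S ⁻¹' Bᶜ) := measurable_prodMk_left hBm.compl
          have hFS : Measurable (F S) := hFm.comp measurable_prodMk_left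
          simp only
          rw [hκ S, withDensity_apply _ hs, hPm, lintegral_withDensity_eq_lintegral_mul _
            (by fun_prop) (by fun_prop)]
          refine le_trans (setLIntegral_mono' hs fun h hh => ?_) (setLIntegral_le_lintegral _ _)
          have hbad : (S, h) ∉ A := fun hx => hh (hAB hx)
          have := catoni_bad m hm c (trueRisk D ℓ h) k (∑ i, ℓ h (S i)) (Q S h) (P h) δ hk (ha h)
            (hQpos S h) (hPpos h) hδ.1 hbad
          simp only [Pi.mul_apply, F]
          rw [← ENNReal.ofReal_mul hδ.1.le, ← ENNReal.ofReal_mul (hPpos h).le]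
          exact ENNReal.ofReal_le_ofReal this
      _ = ∫⁻ h, ∫⁻ S, ENNReal.ofReal δ * F S h ∂μ ∂Pm :=
          lintegral_lintegral_swap (hFm.const_mul _).aemeasurable
      _ ≤ ∫⁻ h, ENNReal.ofReal δ ∂Pm := by
          refine lintegral_mono fun h => ?_
          simp only
          rw [lintegral_const_mul' _ _ ENNReal.ofReal_ne_top]
          exact mul_le_of_le_one_right' (hF1 h)
      _ = ENNReal.ofReal δ := by simp
  have := prob_compl_eq_one_sub (μ := μ ⊗ₘ κ) hBm.compl
  rw [compl_compl] at this
  rw [this]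
  exact tsub_le_tsub_left hC 1
end
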